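/- arXiv:1712.08696 — 2 statements merged into one kernel-verified Lean document; each statement's English description precedes it below -/
import Mathlib

section
/- Let Ω be a bounded open subset of ℝ² with C² boundary, let f₀ be continuously differentiable and f₁ continuous, both real valued with compact supports contained in Ω, and let 0 < K* < K. Let Γ be a nonempty relatively open subset of ∂Ω. If for every k ∈ (K*, K) the function u(·,k) and its gradient in x vanish at every point of Γ, then f₀ = 0 and f₁ = 0 on Ω. -/
/-!
The monodromy of the Hankel function around `k = 0` reduces uniqueness to a moment problem.

As a function of `s = |x - y|²`, the kernel `H₀⁽¹⁾(k√s)` is `(2i/π) log k · J₀` plus terms that are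
entire in `k`, where `J₀` is an entire function of `k²s`. Hence `u(x, k) = A(k) + log k · B(k)` with
`A`, `B` entire, and the same holds for the gradient in `x`. Vanishing for `k` in an interval forces
`B = 0` (`entire_log_separation`): the entire function `A(e^z) + z B(e^z)` is zero, and so is its
translate by `2πi`. Now `B(k)` is an integral of `J₀(k|x - y|)(f₁(y) + ik f₀(y))`, with `J₀` even,
so `f₀` and `f₁` separate and every Taylor coefficient vanishes (`moments_of_log_kernel`). Thus, for
each `x ∈ Γ`, each `m`, and `f` either of `f₀`, `f₁`,
`∫ |x - y|^{2m} f(y) dy = 0` and `∫ |x - y|^{2m} (x - y) f(y) dy = 0` (`moments_of_cauchy_data`).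

Identify the plane with `ℂ`, `x` with `z` and `y` with `ζ`. These identities say that
`∫ (z - ζ)^m (z̄ - ζ̄)^m f` and `∫ (z - ζ)^{m+1} (z̄ - ζ̄)^m f` vanish for all `z` in `Γ`. Since `Γ` is
infinite (`infinite_of_C2Boundary`), induction on the degree shows that all moments `∫ ζ^a ζ̄^b f`
vanish (`cMoment_eq_zero`), and `f = 0` by Stone–Weierstrass (`eq_zero_of_moments`). Neither unique
continuation for the Helmholtz equation nor connectedness of the complement of `Ω` is needed.
-/

open MeasureTheory Real Complex Filter

noncomputable section

/-- The Euclidean plane. -/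
abbrev E2 : Type := EuclideanSpace ℝ (Fin 2)

/-- Bessel function `J₀` (power series, entire). -/
def besselJ0 (z : ℂ) : ℂ :=
  ∑' m : ℕ, ((-1 : ℂ) ^ m * (z / 2) ^ (2 * m)) / ((m.factorial : ℂ)) ^ 2

/-- Partial harmonic sum `1 + 1/2 + ⋯ + 1/m`. -/
def harmSum (m : ℕ) : ℂ := ∑ j ∈ Finset.range m, (1 : ℂ) / (j + 1)

/-- Bessel function `Y₀` (with the principal branch of the logarithm). -/
def besselY0 (z : ℂ) : ℂ :=
  (2 / Real.pi) * (((Real.eulerMascheroniConstant : ℂ) + Complex.log (z / 2)) * besselJ0 z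
    - ∑' m : ℕ, ((-1 : ℂ) ^ (m + 1) * (z / 2) ^ (2 * (m + 1)) * harmSum (m + 1)) /
        (((m + 1).factorial : ℂ)) ^ 2)

/-- Hankel function of the first kind of order zero, `H₀⁽¹⁾ = J₀ + iY₀`. -/
def hankelH0 (z : ℂ) : ℂ := besselJ0 z + Complex.I * besselY0 z

/-- The "conjugate" Hankel function `H̄₀⁽¹⁾ = J₀ − iY₀`. -/
def hankelH0bar (z : ℂ) : ℂ := besselJ0 z - Complex.I * besselY0 z

/-- The radiating scattering solution of `(Δ + k²)u = −f₁ − i k f₀`: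
`u(x,k) = (−i/4)∫_Ω H₀⁽¹⁾(k|x−y|)(f₁(y) + i k f₀(y)) dy`. -/
def scatSol (Ω : Set E2) (f₀ f₁ : E2 → ℝ) (x : E2) (k : ℂ) : ℂ :=
  (-Complex.I / 4) *
    ∫ y in Ω, hankelH0 (k * (‖x - y‖ : ℝ)) * ((f₁ y : ℂ) + Complex.I * k * (f₀ y : ℂ))

/-- Partial derivative of a real valued function in the `i`-th coordinate direction. -/
def pd (i : Fin 2) (f : E2 → ℝ) : E2 → ℝ := fun x => fderiv ℝ f x (EuclideanSpace.single i 1)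

/-- Squared Sobolev norm `‖f‖²_{(m)} = ∑_{|α|≤m} ∫ |∂^α f|²`. -/
def sobNormSq (m : ℕ) (f : E2 → ℝ) : ℝ :=
  ∑ α ∈ (Finset.range (m + 1) ×ˢ Finset.range (m + 1)).filter (fun α => α.1 + α.2 ≤ m),
    ∫ x : E2, ((pd 0)^[α.1] ((pd 1)^[α.2] f) x) ^ 2

/-- Squared euclidean norm of the gradient of a complex valued function on the plane. -/
def gradNormSq (g : E2 → ℂ) (x : E2) : ℝ :=
  ∑ i : Fin 2, ‖fderiv ℝ g x (EuclideanSpace.single i 1)‖ ^ 2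

/-- Squared euclidean norm of the gradient of a real valued function on the plane. -/
def gradNormSqR (g : E2 → ℝ) (x : E2) : ℝ :=
  ∑ i : Fin 2, (fderiv ℝ g x (EuclideanSpace.single i 1)) ^ 2

/-- Laplacian of a complex valued function on the plane (sum of pure second partials). -/
def lapC (g : E2 → ℂ) (x : E2) : ℂ :=
  ∑ i : Fin 2, fderiv ℝ (fun y => fderiv ℝ g y (EuclideanSpace.single i 1)) x
    (EuclideanSpace.single i 1)

/-- Laplacian of a real valued function on the plane. -/
def lapR (g : E2 → ℝ) (x : E2) : ℝ :=
  ∑ i : Fin 2, fderiv ℝ (fun y => fderiv ℝ g y (EuclideanSpace.single i 1)) x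
    (EuclideanSpace.single i 1)

/-- Laplacian of a real valued function on `ℂ ≅ ℝ²`. -/
def lapPlane (g : ℂ → ℝ) (z : ℂ) : ℝ :=
  fderiv ℝ (fun w => fderiv ℝ g w 1) z 1 +
    fderiv ℝ (fun w => fderiv ℝ g w Complex.I) z Complex.I

/-- `C²`-smooth boundary: near every boundary point, `Ω` is a sublevel set of a `C²`
defining function with nonvanishing gradient. -/
def HasC2Boundary (Ω : Set E2) : Prop :=
  ∀ x ∈ frontier Ω, ∃ (U : Set E2) (g : E2 → ℝ), IsOpen U ∧ x ∈ U ∧ ContDiff ℝ 2 g ∧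
    (∀ y ∈ U, fderiv ℝ g y ≠ 0) ∧ (Ω ∩ U = {y ∈ U | g y < 0}) ∧
    (frontier Ω ∩ U = {y ∈ U | g y = 0})

/-- Kirchhoff-type solution of the plane wave equation with initial data `(−f₀, f₁)`,
extended by zero to `t ≤ 0`. -/
def waveSol (f₀ f₁ : E2 → ℝ) (x : E2) (t : ℝ) : ℝ :=
  if t ≤ 0 then 0 else
    (1 / (2 * Real.pi)) * ∫ y in Metric.ball x t, f₁ y / Real.sqrt (t ^ 2 - ‖x - y‖ ^ 2)
    - deriv (fun τ : ℝ =>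
        (1 / (2 * Real.pi)) * ∫ y in Metric.ball x τ, f₀ y / Real.sqrt (τ ^ 2 - ‖x - y‖ ^ 2)) t

/-- The quantity `I₁(k)`: the contour integral (along the segment from `0` to `k`,
parametrized by `ω = ks`) of `2ω²∫_{∂Ω} u(x,ω)ū(x,ω)`. -/
def I1 (Ω : Set E2) (f₀ f₁ : E2 → ℝ) (k : ℂ) : ℂ :=
  2 * k * ∫ s in Set.Ioo (0 : ℝ) 1, (k * s) ^ 2 *
    ∫ x in frontier Ω,
      ((-Complex.I / 4) * ∫ y in Ω,
        ((f₁ y : ℂ) + Complex.I * (k * s) * (f₀ y : ℂ)) * hankelH0 (k * s * (‖x - y‖ : ℝ))) *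
      ((Complex.I / 4) * ∫ y in Ω,
        ((f₁ y : ℂ) - Complex.I * (k * s) * (f₀ y : ℂ)) * hankelH0bar (k * s * (‖x - y‖ : ℝ)))
      ∂(μH[1])

/-- The quantity `I₂(k)`: as `I₁(k)` but with the spatial gradients of the Hankel kernels,
paired by the dot product. -/
def I2 (Ω : Set E2) (f₀ f₁ : E2 → ℝ) (k : ℂ) : ℂ :=
  2 * k * ∫ s in Set.Ioo (0 : ℝ) 1, (k * s) ^ 2 *
    ∫ x in frontier Ω,
      ∑ i : Fin 2,
        ((-Complex.I / 4) * ∫ y in Ω,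
          ((f₁ y : ℂ) + Complex.I * (k * s) * (f₀ y : ℂ)) *
            fderiv ℝ (fun x' => hankelH0 (k * s * (‖x' - y‖ : ℝ))) x
              (EuclideanSpace.single i 1)) *
        ((Complex.I / 4) * ∫ y in Ω,
          ((f₁ y : ℂ) - Complex.I * (k * s) * (f₀ y : ℂ)) *
            fderiv ℝ (fun x' => hankelH0bar (k * s * (‖x' - y‖ : ℝ))) x
              (EuclideanSpace.single i 1))
      ∂(μH[1])

end

namespace SourceUniq

/-! ### Entire power series and integrals depending on them -/

/-- Coefficients of an entire power series of at most exponential growth: `‖a m‖ ≤ D C^m / m!`.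
The class is stable under differentiation of the series. -/
def GoodCoef (a : ℕ → ℂ) : Prop :=
  ∃ D C : ℝ, 0 ≤ D ∧ 0 ≤ C ∧ ∀ m, ‖a m‖ ≤ D * (C ^ m / m.factorial)

/-- The sum `∑ a_m w^m` of a power series. -/
noncomputable def entSer (a : ℕ → ℂ) (w : ℂ) : ℂ := ∑' m, a m * w ^ m

/-- Coefficients of the termwise derivative. -/
def shiftCoef (a : ℕ → ℂ) (m : ℕ) : ℂ := (m + 1) * a (m + 1)

/-- Coefficients of `w ↦ w · (d/dw) ∑ a_m w^m`. -/
def eulerCoef (a : ℕ → ℂ) (m : ℕ) : ℂ := m * a m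

lemma GoodCoef.shift {a : ℕ → ℂ} (h : GoodCoef a) : GoodCoef (shiftCoef a) := by
  obtain ⟨D, C, hD, hC, h⟩ := h
  refine ⟨D * C, C, by positivity, hC, fun m => ?_⟩
  have hm := h (m + 1)
  have h1 : ‖shiftCoef a m‖ = (m + 1) * ‖a (m + 1)‖ := by
    unfold shiftCoef
    rw [norm_mul]
    congr 1
    have : ((m : ℂ) + 1) = ((m + 1 : ℕ) : ℂ) := by push_cast; rfl
    rw [this, Complex.norm_natCast]; push_cast; rfl
  rw [h1]
  calc ((m : ℝ) + 1) * ‖a (m + 1)‖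
      ≤ (m + 1) * (D * (C ^ (m + 1) / (m + 1).factorial)) := by gcongr
    _ = D * C * (C ^ m / m.factorial) := by
      rw [Nat.factorial_succ]; push_cast
      have : (m.factorial : ℝ) ≠ 0 := by positivity
      field_simp
      ring

lemma GoodCoef.euler {a : ℕ → ℂ} (h : GoodCoef a) : GoodCoef (eulerCoef a) := by
  obtain ⟨D, C, hD, hC, h⟩ := h
  refine ⟨D, 2 * C, by positivity, by positivity, fun m => ?_⟩
  have h2 : (m : ℝ) ≤ 2 ^ m := by exact_mod_cast Nat.lt_two_pow_self.le
  calc ‖eulerCoef a m‖ = m * ‖a m‖ := by simp [eulerCoef]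
    _ ≤ 2 ^ m * (D * (C ^ m / m.factorial)) := by gcongr; exact h m
    _ = D * ((2 * C) ^ m / m.factorial) := by rw [mul_pow]; ring

lemma GoodCoef.summable {a : ℕ → ℂ} (h : GoodCoef a) (w : ℂ) :
    Summable fun m => a m * w ^ m := by
  obtain ⟨D, C, hD, hC, h⟩ := h
  refine Summable.of_norm_bounded
    ((Real.summable_pow_div_factorial (C * ‖w‖)).mul_left D) fun m => ?_
  calc ‖a m * w ^ m‖ = ‖a m‖ * ‖w‖ ^ m := by simp
    _ ≤ D * (C ^ m / m.factorial) * ‖w‖ ^ m := by gcongr; exact h m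
    _ = _ := by rw [mul_pow]; ring

lemma GoodCoef.hasDerivAt {a : ℕ → ℂ} (h : GoodCoef a) (w : ℂ) :
    HasDerivAt (entSer a) (entSer (shiftCoef a) w) w := by
  obtain ⟨D, C, hD, hC, hb⟩ := h.euler
  set R : ℝ := ‖w‖ + 1 with hR
  have hR1 : 1 ≤ R := by have := norm_nonneg w; linarith
  have hbd : ∀ (n : ℕ) (y : ℂ), y ∈ Metric.ball (0 : ℂ) R →
      ‖a n * (n * y ^ (n - 1))‖ ≤ D * ((C * R) ^ n / n.factorial) := by
    intro n y hy
    have hy' : ‖y‖ ≤ R := by simpa using (Metric.mem_ball.1 hy).le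
    calc ‖a n * (n * y ^ (n - 1))‖ = ‖eulerCoef a n‖ * ‖y‖ ^ (n - 1) := by
          simp [eulerCoef]; ring
      _ ≤ D * (C ^ n / n.factorial) * R ^ n := by
          gcongr
          · exact hb n
          · calc ‖y‖ ^ (n - 1) ≤ R ^ (n - 1) := by gcongr
              _ ≤ R ^ n := pow_le_pow_right₀ hR1 (Nat.sub_le n 1)
      _ = _ := by rw [mul_pow]; ring
  have hsum : Summable fun n : ℕ => D * ((C * R) ^ n / n.factorial) :=
    (Real.summable_pow_div_factorial (C * R)).mul_left D
  have hw : w ∈ Metric.ball (0 : ℂ) R := by simp [hR]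
  have key := hasDerivAt_tsum_of_isPreconnected (g := fun n y => a n * y ^ n)
    (g' := fun n y => a n * (n * y ^ (n - 1))) hsum Metric.isOpen_ball
    (convex_ball (0 : ℂ) R).isPreconnected
    (fun n y _ => (hasDerivAt_pow n y).const_mul (a n)) hbd hw (h.summable w) hw
  have hs : Summable fun n : ℕ => a n * (n * w ^ (n - 1)) :=
    Summable.of_norm_bounded hsum fun n => hbd n w hw
  have e : ∑' n : ℕ, a n * (n * w ^ (n - 1)) = entSer (shiftCoef a) w := by
    rw [hs.tsum_eq_zero_add]
    simp only [entSer, shiftCoef, Nat.cast_zero, zero_mul, mul_zero, zero_add,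
      Nat.add_sub_cancel]
    refine tsum_congr fun n => ?_
    push_cast; ring
  rw [e] at key
  exact key

lemma GoodCoef.differentiable {a : ℕ → ℂ} (h : GoodCoef a) : Differentiable ℂ (entSer a) :=
  fun w => (h.hasDerivAt w).differentiableAt

lemma GoodCoef.continuous {a : ℕ → ℂ} (h : GoodCoef a) : Continuous (entSer a) :=
  h.differentiable.continuous

lemma entSer_zero (a : ℕ → ℂ) : entSer a 0 = a 0 := by
  unfold entSer
  rw [tsum_eq_single 0]
  · simp
  · intro m hm; simp [hm]

lemma GoodCoef.entSer_euler {a : ℕ → ℂ} (h : GoodCoef a) (w : ℂ) :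
    entSer (eulerCoef a) w = w * entSer (shiftCoef a) w := by
  have := (h.euler.summable w).tsum_eq_zero_add
  unfold entSer
  rw [this, ← tsum_mul_left]
  simp only [eulerCoef, shiftCoef, Nat.cast_zero, zero_mul, zero_add]
  refine tsum_congr fun n => ?_
  push_cast; ring

lemma hasDerivAt_integral_entSer {S : Set E2} (hS : IsCompact S) {s : E2 → ℝ}
    (hs : ContinuousOn s S) {c : E2 → ℂ} (hc : ContinuousOn c S) {a : ℕ → ℂ} (h : GoodCoef a)
    (w : ℂ) :
    HasDerivAt (fun w : ℂ => ∫ y in S, entSer a (w * s y) * c y)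
      (∫ y in S, entSer (shiftCoef a) (w * s y) * (s y * c y)) w := by
  have hms := hS.measurableSet
  have hs' : ContinuousOn (fun y => (s y : ℂ)) S := Complex.continuous_ofReal.comp_continuousOn hs
  obtain ⟨R, hR⟩ := hS.exists_bound_of_continuousOn hs'
  obtain ⟨M, hM⟩ := (isCompact_closedBall (0 : ℂ) ((‖w‖ + 1) * R)).exists_bound_of_continuousOn
    h.shift.continuous.continuousOn
  have hcont : ∀ (b : ℕ → ℂ), GoodCoef b → ∀ w : ℂ, ∀ d : E2 → ℂ, ContinuousOn d S →
      ContinuousOn (fun y => entSer b (w * s y) * d y) S := fun b hb w d hd =>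
    (hb.continuous.comp_continuousOn (continuousOn_const.mul hs')).mul hd
  refine (hasDerivAt_integral_of_dominated_loc_of_deriv_le
    (F := fun w y => entSer a (w * s y) * c y)
    (F' := fun w y => entSer (shiftCoef a) (w * s y) * (s y * c y))
    (μ := volume.restrict S) (bound := fun y => M * ‖(s y : ℂ) * c y‖)
    (Metric.ball_mem_nhds w one_pos) ?_ ?_ ?_ ?_ ?_ ?_).2
  · exact Eventually.of_forall fun w => (hcont a h w c hc).aestronglyMeasurable hms
  · exact (hcont a h w c hc).integrableOn_compact hS
  · exact (hcont _ h.shift w _ (hs'.mul hc)).aestronglyMeasurable hms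
  · refine (ae_restrict_iff' hms).2 (Eventually.of_forall fun y hy v hv => ?_)
    rw [norm_mul]
    gcongr
    apply hM
    rw [mem_closedBall_zero_iff, norm_mul]
    have h1 : ‖v‖ ≤ ‖w‖ + 1 := by
      have h2 : ‖v - w‖ < 1 := by simpa [dist_eq_norm] using hv
      have := norm_le_norm_add_norm_sub' v w
      linarith
    have h3 := hR y hy
    gcongr
  · exact (((hs'.mul hc).norm.const_smul M).integrableOn_compact hS)
  · refine Eventually.of_forall fun y v _ => ?_
    have h1 : HasDerivAt (fun v : ℂ => v * (s y : ℂ)) (s y : ℂ) v := by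
      simpa using (hasDerivAt_id v).mul_const (s y : ℂ)
    have := ((h.hasDerivAt (v * s y)).comp v h1).mul_const (c y)
    simpa [mul_assoc, Function.comp_def] using this

/-- The moments against powers of `s` are read off as successive derivatives at `w = 0`. -/
lemma moments_zero {S : Set E2} (hS : IsCompact S) {s : E2 → ℝ} (hs : ContinuousOn s S) (m : ℕ) :
    ∀ {c : E2 → ℂ} (_ : ContinuousOn c S) {a : ℕ → ℂ} (_ : GoodCoef a),
      (∀ w : ℂ, ∫ y in S, entSer a (w * s y) * c y = 0) → a m ≠ 0 →
        ∫ y in S, (s y : ℂ) ^ m * c y = 0 := by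
  induction m with
  | zero =>
    intro c hc a ha h h0
    have := h 0
    simp only [zero_mul, entSer_zero, integral_const_mul] at this
    simpa using (mul_eq_zero.1 this).resolve_left h0
  | succ m ih =>
    intro c hc a ha h h0
    have hs' : ContinuousOn (fun y => (s y : ℂ)) S :=
      Complex.continuous_ofReal.comp_continuousOn hs
    have := ih (hs'.mul hc) ha.shift (fun w => ?_) ?_
    · simpa [pow_succ, mul_assoc] using this
    · have h1 := hasDerivAt_integral_entSer hS hs hc ha w
      rw [funext h] at h1
      exact h1.unique (hasDerivAt_const w 0)
    · unfold shiftCoef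
      exact mul_ne_zero (by exact_mod_cast Nat.succ_ne_zero m) h0

/-! ### Separating the logarithm -/

/-- Two entire functions with `A + B log = 0` on an interval: `A(e^z) + z B(e^z)` vanishes
identically, and comparing `z` with `z + 2πi` isolates `B`. -/
lemma entire_log_separation {A B : ℂ → ℂ} (hA : Differentiable ℂ A) (hB : Differentiable ℂ B)
    {p q : ℝ} (hp : 0 < p) (hpq : p < q)
    (h : ∀ k ∈ Set.Ioo p q, A k + (Real.log k : ℂ) * B k = 0) : ∀ k, B k = 0 := by
  have hg : Differentiable ℂ fun z => A (Complex.exp z) + z * B (Complex.exp z) := by fun_prop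
  have hz : (fun z => A (Complex.exp z) + z * B (Complex.exp z)) = fun _ => 0 := by
    obtain ⟨k₀, hk₀⟩ := exists_between hpq
    have hk₀' : 0 < k₀ := hp.trans hk₀.1
    refine AnalyticOnNhd.eq_of_frequently_eq (z₀ := ((Real.log k₀ : ℝ) : ℂ))
      (fun z _ => hg.analyticAt z) (fun z _ => analyticAt_const) ?_
    have hev : ∀ᶠ t : ℝ in nhds (Real.log k₀), Real.exp t ∈ Set.Ioo p q := by
      apply Real.continuous_exp.continuousAt.eventually_mem
      rw [Real.exp_log hk₀']
      exact Ioo_mem_nhds hk₀.1 hk₀.2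
    have hfr : ∃ᶠ t : ℝ in nhdsWithin (Real.log k₀) {Real.log k₀}ᶜ, Real.exp t ∈ Set.Ioo p q :=
      (hev.filter_mono nhdsWithin_le_nhds).frequently
    have ht : Tendsto (fun t : ℝ => (t : ℂ)) (nhdsWithin (Real.log k₀) {Real.log k₀}ᶜ)
        (nhdsWithin ((Real.log k₀ : ℝ) : ℂ) {((Real.log k₀ : ℝ) : ℂ)}ᶜ) := by
      refine tendsto_nhdsWithin_iff.2
        ⟨(Complex.continuous_ofReal.tendsto _).mono_left nhdsWithin_le_nhds, ?_⟩
      filter_upwards [self_mem_nhdsWithin] with t ht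
      simpa using ht
    refine ht.frequently (hfr.mono fun t ht => ?_)
    have := h _ ht
    rw [Real.log_exp] at this
    simpa using this
  have hne : ∀ k ≠ 0, B k = 0 := by
    intro k hk
    have h1 := congrFun hz (Complex.log k)
    have h2 := congrFun hz (Complex.log k + 2 * Real.pi * Complex.I)
    simp only [Complex.exp_add, Complex.exp_two_pi_mul_I, mul_one, Complex.exp_log hk] at h1 h2
    have h3 : (2 * Real.pi * Complex.I) * B k = 0 := by linear_combination h2 - h1
    exact (mul_eq_zero.1 h3).resolve_left Complex.two_pi_I_ne_zero
  intro k
  have hBz : B = fun _ => 0 :=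
    Continuous.ext_on (dense_compl_singleton (0 : ℂ)) hB.continuous continuous_const
      fun k hk => hne k hk
  exact congrFun hBz k

lemma continuousOn_entSer_mul {S : Set E2} {s : E2 → ℝ} (hs : ContinuousOn s S) {b : ℕ → ℂ}
    (hb : GoodCoef b) {d : E2 → ℂ} (hd : ContinuousOn d S) (w : ℂ) :
    ContinuousOn (fun y => entSer b (w * s y) * d y) S :=
  (hb.continuous.comp_continuousOn
    (continuousOn_const.mul (Complex.continuous_ofReal.comp_continuousOn hs))).mul hd

lemma integral_entSer_split {S : Set E2} (hS : IsCompact S) {s : E2 → ℝ}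
    (hs : ContinuousOn s S) {f₀ f₁ : E2 → ℝ} (hf₀ : ContinuousOn f₀ S) (hf₁ : ContinuousOn f₁ S)
    {b : ℕ → ℂ} (hb : GoodCoef b) {d : E2 → ℂ} (hd : ContinuousOn d S) (w κ : ℂ) :
    ∫ y in S, entSer b (w * s y) * d y * ((f₁ y : ℂ) + κ * (f₀ y : ℂ)) =
      (∫ y in S, entSer b (w * s y) * (d y * f₁ y)) +
        κ * ∫ y in S, entSer b (w * s y) * (d y * f₀ y) := by
  have h0 : ContinuousOn (fun y => (f₀ y : ℂ)) S := Complex.continuous_ofReal.comp_continuousOn hf₀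
  have h1 : ContinuousOn (fun y => (f₁ y : ℂ)) S := Complex.continuous_ofReal.comp_continuousOn hf₁
  rw [← integral_const_mul, ← integral_add]
  · refine integral_congr_ae (Eventually.of_forall fun y => ?_)
    ring
  · exact (continuousOn_entSer_mul hs hb (hd.mul h1) w).integrableOn_compact hS
  · exact (continuousOn_const.mul
      (continuousOn_entSer_mul hs hb (hd.mul h0) w)).integrableOn_compact hS

/-- If an integral whose kernel is `log k` times an entire function of `k²s` plus other such
entire functions vanishes for `k` in an interval, then the coefficient of `log k` vanishes for all
complex `k`. Its parts even and odd in `k` separate `f₁` from `f₀`, and its Taylor coefficients are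
the moments. -/
lemma moments_of_log_kernel {S : Set E2} (hS : IsCompact S) {s : E2 → ℝ}
    (hs : ContinuousOn s S) {f₀ f₁ : E2 → ℝ} (hf₀ : ContinuousOn f₀ S) (hf₁ : ContinuousOn f₁ S)
    {a : ℕ → ℂ} (ha : GoodCoef a) {c : E2 → ℂ} (hc : ContinuousOn c S)
    {b : Fin 3 → ℕ → ℂ} (hb : ∀ i, GoodCoef (b i)) {d : Fin 3 → E2 → ℂ}
    (hd : ∀ i, ContinuousOn (d i) S) {p q : ℝ} (hp : 0 < p) (hpq : p < q)
    (h : ∀ k ∈ Set.Ioo p q,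
      ∫ y in S, ((Real.log k : ℂ) * (entSer a ((k : ℂ) ^ 2 * s y) * c y) +
        ∑ i, entSer (b i) ((k : ℂ) ^ 2 * s y) * d i y) *
          ((f₁ y : ℂ) + Complex.I * k * (f₀ y : ℂ)) = 0) (m : ℕ) (hm : a m ≠ 0) :
    ∫ y in S, (s y : ℂ) ^ m * (c y * f₁ y) = 0 ∧ ∫ y in S, (s y : ℂ) ^ m * (c y * f₀ y) = 0 := by
  have h0 : ContinuousOn (fun y => (f₀ y : ℂ)) S := Complex.continuous_ofReal.comp_continuousOn hf₀
  have h1 : ContinuousOn (fun y => (f₁ y : ℂ)) S := Complex.continuous_ofReal.comp_continuousOn hf₁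
  set T : (ℕ → ℂ) → (E2 → ℂ) → ℂ → ℂ := fun b d w => ∫ y in S, entSer b (w * s y) * d y with hT
  have hTd : ∀ {b d}, GoodCoef b → ContinuousOn d S → Differentiable ℂ (T b d) :=
    fun hb hd w => (hasDerivAt_integral_entSer hS hs hd hb w).differentiableAt
  have hpart : ∀ {b d}, GoodCoef b → ContinuousOn d S → Differentiable ℂ fun k : ℂ =>
      T b (fun y => d y * f₁ y) (k ^ 2) + Complex.I * k * T b (fun y => d y * f₀ y) (k ^ 2) := by
    intro b d hb hd
    have e1 := hTd hb (hd.mul h1)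
    have e0 := hTd hb (hd.mul h0)
    have hsq : Differentiable ℂ fun k : ℂ => k ^ 2 := by fun_prop
    exact (e1.comp hsq).add ((differentiable_id.const_mul Complex.I).mul (e0.comp hsq))
  have hB0 := entire_log_separation (Differentiable.fun_sum fun i (_ : i ∈ Finset.univ) =>
    hpart (hb i) (hd i)) (hpart ha hc) hp hpq (fun k hk => by
      rw [← h k hk]
      have hF : ContinuousOn (fun y => (f₁ y : ℂ) + Complex.I * k * (f₀ y : ℂ)) S :=
        h1.add (continuousOn_const.mul h0)
      have hi : ∀ {b d}, GoodCoef b → ContinuousOn d S → IntegrableOn (fun y =>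
          entSer b ((k : ℂ) ^ 2 * s y) * d y * ((f₁ y : ℂ) + Complex.I * k * (f₀ y : ℂ))) S :=
        fun hb hd => ((continuousOn_entSer_mul hs hb hd _).mul hF).integrableOn_compact hS
      simp only [add_mul, Finset.sum_mul, mul_assoc (Real.log k : ℂ)]
      rw [integral_add, integral_finsetSum, integral_const_mul]
      · rw [integral_entSer_split hS hs hf₀ hf₁ ha hc, add_comm]
        congr 1
        exact Finset.sum_congr rfl fun i _ =>
          (integral_entSer_split hS hs hf₀ hf₁ (hb i) (hd i) _ _).symm
      · exact fun i _ => hi (hb i) (hd i)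
      · exact (hi ha hc).const_mul _
      · exact integrable_finsetSum _ fun i _ => hi (hb i) (hd i))
  -- comparing `k` with `-k`
  have hsep : ∀ k : ℂ, T a (fun y => c y * f₁ y) (k ^ 2) = 0 ∧
      k * T a (fun y => c y * f₀ y) (k ^ 2) = 0 := by
    intro k
    have e1 := hB0 k
    have e2 := hB0 (-k)
    rw [neg_sq] at e2
    constructor
    · linear_combination (e1 + e2) / 2
    · linear_combination -Complex.I * (e1 - e2) / 2 +
        (k * T a (fun y => c y * f₀ y) (k ^ 2)) * Complex.I_sq
  have hsq : ∀ w : ℂ, ∃ k : ℂ, k ^ 2 = w := fun w => IsAlgClosed.exists_pow_nat_eq w two_pos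
  constructor
  · refine moments_zero hS hs m (hc.mul h1) ha (fun w => ?_) hm
    obtain ⟨k, rfl⟩ := hsq w
    exact (hsep k).1
  · have hz : T a (fun y => c y * f₀ y) = fun _ => 0 := by
      refine Continuous.ext_on (dense_compl_singleton (0 : ℂ)) (hTd ha (hc.mul h0)).continuous
        continuous_const fun w hw => ?_
      obtain ⟨k, rfl⟩ := hsq w
      refine (mul_eq_zero.1 (hsep k).2).resolve_left ?_
      rintro rfl
      simp at hw
    exact moments_zero hS hs m (hc.mul h0) ha (fun w => congrFun hz w) hm

/-! ### Moments in the complex coordinate -/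

/-- The coordinate `y ↦ y₀ + i y₁` identifying the plane with `ℂ`. -/
def toC (y : E2) : ℂ := ⟨y 0, y 1⟩

lemma toC_eq (y : E2) : toC y = (y 0 : ℂ) + (y 1 : ℂ) * Complex.I := Complex.mk_eq_add_mul_I _ _

lemma continuous_toC : Continuous toC := by
  have : toC = fun y : E2 => (y 0 : ℂ) + (y 1 : ℂ) * Complex.I := funext toC_eq
  rw [this]
  fun_prop

lemma toC_injective : Function.Injective toC := by
  intro x y h
  have h0 := congrArg Complex.re h
  have h1 := congrArg Complex.im h
  ext i
  fin_cases i
  · exact h0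
  · exact h1

lemma toC_sub (x y : E2) : toC (x - y) = toC x - toC y := by
  apply Complex.ext <;> simp [toC]

lemma toC_mul_conj (x : E2) : toC x * (starRingEnd ℂ) (toC x) = ((‖x‖ ^ 2 : ℝ) : ℂ) := by
  rw [Complex.mul_conj, EuclideanSpace.real_norm_sq_eq]
  simp [toC, Complex.normSq_apply, sq]

/-- Stone–Weierstrass: a compactly supported continuous function all of whose moments
`∫ ζ^a ζ̄^b f` vanish is zero. -/
lemma eq_zero_of_moments {S : Set E2} (hS : IsCompact S) {f : E2 → ℝ} (hf : Continuous f)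
    (hsupp : ∀ y ∉ S, f y = 0)
    (h : ∀ a b : ℕ, ∫ y in S, toC y ^ a * (starRingEnd ℂ) (toC y) ^ b * (f y : ℂ) = 0) :
    ∀ x, f x = 0 := by
  have : CompactSpace S := isCompact_iff_compactSpace.1 hS
  have hms := hS.measurableSet
  let Z : C(S, ℂ) := ⟨fun y => toC y, continuous_toC.comp continuous_subtype_val⟩
  let L : C(S, ℂ) → ℂ := fun g => ∫ y : S, g y * (f y : ℂ) ∂(volume.comap Subtype.val)
  have : IsFiniteMeasure ((volume : Measure E2).comap (Subtype.val : S → E2)) := by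
    constructor
    rw [MeasurableEmbedding.comap_apply (MeasurableEmbedding.subtype_coe hms)]
    simpa using hS.measure_lt_top
  have hfS : Continuous fun y : S => (f y : ℂ) := by fun_prop
  have hint : ∀ g : C(S, ℂ), Integrable (fun y : S => g y * (f y : ℂ))
      ((volume : Measure E2).comap Subtype.val) := by
    intro g
    obtain ⟨M, hM⟩ := isCompact_univ.exists_bound_of_continuousOn
      (g.continuous.mul hfS).continuousOn
    exact Integrable.of_bound (g.continuous.mul hfS).aestronglyMeasurable M
      (Eventually.of_forall fun y => hM y trivial)
  have hLadd : ∀ g g', L (g + g') = L g + L g' := by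
    intro g g'
    simp only [L, ContinuousMap.add_apply, add_mul]
    exact integral_add (hint g) (hint g')
  have hLsmul : ∀ (r : ℂ) g, L (r • g) = r * L g := by
    intro r g
    simp only [L, ContinuousMap.smul_apply, smul_eq_mul, mul_assoc]
    exact integral_const_mul _ _
  have hLcont : Continuous L := by
    obtain ⟨M, hM⟩ := isCompact_univ.exists_bound_of_continuousOn hfS.continuousOn
    let Lin : C(S, ℂ) →ₗ[ℂ] ℂ := { toFun := L, map_add' := hLadd, map_smul' := hLsmul }
    refine (Lin.mkContinuous
      (M * ((volume : Measure E2).comap (Subtype.val : S → E2)).real Set.univ) fun g => ?_).continuous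
    calc ‖L g‖ ≤ ‖g‖ * M * ((volume : Measure E2).comap (Subtype.val : S → E2)).real Set.univ := by
          refine norm_integral_le_of_norm_le_const (Eventually.of_forall fun y => ?_)
          rw [norm_mul]
          gcongr
          · exact g.norm_coe_le_norm y
          · exact hM y trivial
      _ = _ := by ring
  have hmon : ∀ g ∈ Submonoid.closure ({Z} ∪ star {Z} : Set C(S, ℂ)),
      ∃ a b : ℕ, g = Z ^ a * star Z ^ b := by
    intro g hg
    induction hg using Submonoid.closure_induction with
    | mem g hg =>
      rcases hg with hg | hg
      · rw [Set.mem_singleton_iff] at hg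
        exact ⟨1, 0, by simp [hg]⟩
      · rw [Set.mem_star, Set.mem_singleton_iff] at hg
        exact ⟨0, 1, by simp [← hg]⟩
    | one => exact ⟨0, 0, by simp⟩
    | mul g g' _ _ h1 h2 =>
      obtain ⟨a, b, rfl⟩ := h1
      obtain ⟨a', b', rfl⟩ := h2
      exact ⟨a + a', b + b', by ring⟩
  have hadj : ∀ g ∈ StarAlgebra.adjoin ℂ ({Z} : Set C(S, ℂ)), L g = 0 := by
    intro g hg
    rw [← StarSubalgebra.mem_toSubalgebra, StarAlgebra.adjoin_toSubalgebra,
      ← Subalgebra.mem_toSubmodule, Algebra.adjoin_eq_span] at hg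
    induction hg using Submodule.span_induction with
    | mem g hg =>
      obtain ⟨a, b, rfl⟩ := hmon g hg
      rw [← h a b, ← integral_subtype_comap hms]
      rfl
    | zero => simp [L]
    | add g g' _ _ h1 h2 => rw [hLadd, h1, h2, add_zero]
    | smul r g _ h1 => rw [hLsmul, h1, mul_zero]
  have hdense : (StarAlgebra.adjoin ℂ ({Z} : Set C(S, ℂ))).topologicalClosure = ⊤ := by
    apply ContinuousMap.starSubalgebra_topologicalClosure_eq_top_of_separatesPoints
    intro x y hxy
    refine ⟨Z, ⟨Z, StarAlgebra.subset_adjoin ℂ _ (Set.mem_singleton Z), rfl⟩, fun he => hxy ?_⟩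
    exact Subtype.ext (toC_injective he)
  have hall : ∀ g, L g = 0 := by
    intro g
    have hg : g ∈ closure (StarAlgebra.adjoin ℂ ({Z} : Set C(S, ℂ)) : Set C(S, ℂ)) := by
      rw [← StarSubalgebra.topologicalClosure_coe, hdense]
      exact StarSubalgebra.mem_top
    exact closure_minimal (t := {g | L g = 0}) hadj
      (isClosed_singleton.preimage hLcont) hg
  -- testing against `f` itself
  have hff : ∫ y, f y * f y = 0 := by
    have h1 : ∫ y in S, (f y : ℂ) * (f y : ℂ) = 0 := by
      rw [← integral_subtype_comap hms]
      exact hall ⟨fun y => (f y : ℂ), hfS⟩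
    rw [setIntegral_eq_integral_of_forall_compl_eq_zero (fun y hy => by simp [hsupp y hy])] at h1
    have h2 : ((∫ y, f y * f y : ℝ) : ℂ) = 0 := by
      rw [← h1, ← integral_complex_ofReal]
      simp
    exact_mod_cast h2
  intro x
  by_contra hx
  have hcs : HasCompactSupport fun y => f y * f y :=
    HasCompactSupport.intro hS fun y hy => by simp [hsupp y hy]
  exact (Continuous.integral_pos_of_hasCompactSupport_nonneg_nonzero (μ := volume) (x := x)
    (hf.mul hf) hcs (fun y => mul_self_nonneg (f y)) (mul_self_ne_zero.2 hx)).ne' hff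

/-- The complex moment `∫ ζ^a ζ̄^b f`. -/
noncomputable def cMoment (S : Set E2) (f : E2 → ℝ) (a b : ℕ) : ℂ :=
  ∫ y in S, toC y ^ a * (starRingEnd ℂ) (toC y) ^ b * (f y : ℂ)

lemma cMoment_conj (S : Set E2) (f : E2 → ℝ) (a b : ℕ) :
    cMoment S f b a = (starRingEnd ℂ) (cMoment S f a b) := by
  unfold cMoment
  rw [← integral_conj]
  refine integral_congr_ae (Eventually.of_forall fun y => ?_)
  simp [mul_comm]

lemma integral_centered {S : Set E2} (hS : IsCompact S) {f : E2 → ℝ} (hf : Continuous f)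
    (z : ℂ) (a b : ℕ) :
    ∫ y in S, (z - toC y) ^ a * (starRingEnd ℂ) (z - toC y) ^ b * (f y : ℂ) =
      ∑ i ∈ Finset.range (a + 1), ∑ j ∈ Finset.range (b + 1),
        ((a.choose i : ℂ) * (b.choose j) * (-1) ^ i * (-1) ^ j * cMoment S f i j) *
          (z ^ (a - i) * (starRingEnd ℂ) z ^ (b - j)) := by
  have hc := continuous_toC
  have e : ∀ y, (z - toC y) ^ a * (starRingEnd ℂ) (z - toC y) ^ b * (f y : ℂ) =
      ∑ i ∈ Finset.range (a + 1), ∑ j ∈ Finset.range (b + 1),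
        ((a.choose i : ℂ) * (b.choose j) * (-1) ^ i * (-1) ^ j *
          (z ^ (a - i) * (starRingEnd ℂ) z ^ (b - j))) *
            (toC y ^ i * (starRingEnd ℂ) (toC y) ^ j * (f y : ℂ)) := by
    intro y
    have e1 : z - toC y = (-toC y) + z := by ring
    rw [e1, map_add, add_pow, add_pow, Finset.sum_mul_sum, Finset.sum_mul]
    refine Finset.sum_congr rfl fun i _ => ?_
    rw [Finset.sum_mul]
    refine Finset.sum_congr rfl fun j _ => ?_
    rw [map_neg, neg_pow (toC y), neg_pow ((starRingEnd ℂ) (toC y))]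
    ring
  have hint : ∀ i j : ℕ, ∀ C : ℂ, IntegrableOn (fun y =>
      C * (toC y ^ i * (starRingEnd ℂ) (toC y) ^ j * (f y : ℂ))) S := fun i j C =>
    (by fun_prop : Continuous fun y =>
      C * (toC y ^ i * (starRingEnd ℂ) (toC y) ^ j * (f y : ℂ))).continuousOn.integrableOn_compact hS
  simp_rw [e]
  rw [integral_finsetSum _ fun i _ => integrable_finsetSum _ fun j _ => hint i j _]
  refine Finset.sum_congr rfl fun i _ => ?_
  rw [integral_finsetSum _ fun j _ => hint i j _]
  refine Finset.sum_congr rfl fun j _ => ?_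
  rw [integral_const_mul]
  unfold cMoment
  ring

lemma coeff_zero_of_infinite_roots {W : Set ℂ} (hW : W.Infinite) (n : ℕ) (c : ℕ → ℂ)
    (h : ∀ w ∈ W, ∑ j ∈ Finset.range (n + 1), c j * w ^ (n - j) = 0) :
    ∀ j ≤ n, c j = 0 := by
  intro j hj
  set p : Polynomial ℂ :=
    ∑ i ∈ Finset.range (n + 1), Polynomial.C (c i) * Polynomial.X ^ (n - i) with hp
  have hp0 : p = 0 := by
    refine Polynomial.eq_zero_of_infinite_isRoot p (hW.mono fun w hw => ?_)
    simp only [Set.mem_ofPred_eq, Polynomial.IsRoot.def, hp, Polynomial.eval_finsetSum,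
      Polynomial.eval_mul, Polynomial.eval_C, Polynomial.eval_pow, Polynomial.eval_X]
    exact h w hw
  have h1 := congrArg (fun q => Polynomial.coeff q (n - j)) hp0
  simp only [hp, Polynomial.finsetSum_coeff, Polynomial.coeff_C_mul_X_pow,
    Polynomial.coeff_zero] at h1
  rw [Finset.sum_eq_single j] at h1
  · simpa using h1
  · intro i hi hij
    rw [if_neg]
    have := Finset.mem_range.1 hi
    omega
  · intro hj'
    exact absurd (Finset.mem_range.2 (by omega)) hj'

/-- Moments centred at the points of an infinite set determine all moments. If the moments of
bidegree at most `(n, n)` vanish, the centred moment of bidegree `(n + 1, n)` is a polynomial in `z̄`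
alone whose coefficients are the moments of bidegree `(n + 1, j)`; having infinitely many zeros, it
is zero. -/
lemma cMoment_eq_zero {S : Set E2} (hS : IsCompact S) {f : E2 → ℝ} (hf : Continuous f)
    {W : Set ℂ} (hW : W.Infinite)
    (h0 : ∀ z ∈ W, ∀ m : ℕ,
      ∫ y in S, (z - toC y) ^ m * (starRingEnd ℂ) (z - toC y) ^ m * (f y : ℂ) = 0)
    (h1 : ∀ z ∈ W, ∀ m : ℕ,
      ∫ y in S, (z - toC y) ^ (m + 1) * (starRingEnd ℂ) (z - toC y) ^ m * (f y : ℂ) = 0) :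
    ∀ a b : ℕ, cMoment S f a b = 0 := by
  have hWc : ((starRingEnd ℂ) '' W).Infinite :=
    hW.image (star_injective (R := ℂ)).injOn
  obtain ⟨z₀, hz₀⟩ := hW.nonempty
  have main : ∀ n : ℕ, ∀ a ≤ n, ∀ b ≤ n, cMoment S f a b = 0 := by
    intro n
    induction n with
    | zero =>
      intro a ha b hb
      obtain rfl : a = 0 := by omega
      obtain rfl : b = 0 := by omega
      simpa [cMoment] using h0 z₀ hz₀ 0
    | succ n ih =>
      -- in the centred moment of bidegree `(n + 1, n)` only the terms with `i = n + 1` survive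
      have hlow : ∀ j ≤ n, cMoment S f (n + 1) j = 0 := by
        have := coeff_zero_of_infinite_roots hWc n (fun j => ((n + 1).choose (n + 1) : ℂ) *
          (n.choose j) * (-1) ^ (n + 1) * (-1) ^ j * cMoment S f (n + 1) j) (by
            rintro _ ⟨z, hz, rfl⟩
            have e := h1 z hz n
            rw [integral_centered hS hf, Finset.sum_range_succ, Finset.sum_eq_zero, zero_add] at e
            · rw [← e]
              refine Finset.sum_congr rfl fun j _ => ?_
              simp
            · intro i hi
              refine Finset.sum_eq_zero fun j hj => ?_
              rw [ih i (by have := Finset.mem_range.1 hi; omega) j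
                (by have := Finset.mem_range.1 hj; omega)]
              simp)
        intro j hj
        have e := this j hj
        have hne : ((n.choose j : ℕ) : ℂ) ≠ 0 := by
          exact_mod_cast (Nat.choose_pos hj).ne'
        simpa [hne] using e
      -- by conjugation, `f` being real
      have hlow' : ∀ j ≤ n, cMoment S f j (n + 1) = 0 := fun j hj => by
        rw [cMoment_conj, hlow j hj, map_zero]
      have hzero : ∀ i ≤ n + 1, ∀ j ≤ n + 1, ¬ (i = n + 1 ∧ j = n + 1) → cMoment S f i j = 0 := by
        intro i hi j hj hij
        by_cases h : i = n + 1
        · subst h; exact hlow j (by omega)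
        · by_cases h' : j = n + 1
          · subst h'; exact hlow' i (by omega)
          · exact ih i (by omega) j (by omega)
      have htop : cMoment S f (n + 1) (n + 1) = 0 := by
        have e := h0 z₀ hz₀ (n + 1)
        rw [integral_centered hS hf, Finset.sum_eq_single (n + 1),
          Finset.sum_eq_single (n + 1)] at e
        · simpa using e
        · intro j hj hne
          rw [hzero _ le_rfl j (by have := Finset.mem_range.1 hj; omega) (by omega)]
          simp
        · simp
        · intro i hi hne
          refine Finset.sum_eq_zero fun j hj => ?_
          rw [hzero i (by have := Finset.mem_range.1 hi; omega) j
            (by have := Finset.mem_range.1 hj; omega) (by omega)]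
          simp
        · simp
      intro a ha b hb
      by_cases h : a = n + 1 ∧ b = n + 1
      · rw [h.1, h.2, htop]
      · exact hzero a ha b hb h
  exact fun a b => main (max a b) a (le_max_left a b) b (le_max_right a b)

/-! ### The boundary piece is infinite -/

/-- A nonempty relatively open piece of a `C²` boundary is infinite. Near a boundary point `x` the
defining function `g` has opposite signs at `x ± r v`, where `v` is a direction in which it
increases, so by connectedness it has a zero on every small circle about `x`. -/
lemma infinite_of_C2Boundary {Ω : Set E2} (hΩ2 : HasC2Boundary Ω) {V : Set E2} (hV : IsOpen V)
    (hne : (V ∩ frontier Ω).Nonempty) : (V ∩ frontier Ω).Infinite := by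
  obtain ⟨x, hxV, hxΩ⟩ := hne
  obtain ⟨U, g, hU, hxU, hg, hg', -, hgz⟩ := hΩ2 x hxΩ
  have hgx : g x = 0 := by
    have : x ∈ frontier Ω ∩ U := ⟨hxΩ, hxU⟩
    rw [hgz] at this
    exact this.2
  obtain ⟨v, hv⟩ : ∃ v, 0 < fderiv ℝ g x v := by
    obtain ⟨v, hv⟩ : ∃ v, fderiv ℝ g x v ≠ 0 := by
      by_contra! hcon
      exact hg' x hxU (ContinuousLinearMap.ext hcon)
    rcases hv.lt_or_gt with hv | hv
    · exact ⟨-v, by rw [map_neg]; linarith⟩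
    · exact ⟨v, hv⟩
  have hv0 : v ≠ 0 := by rintro rfl; simp at hv
  have hnv : 0 < ‖v‖ := norm_pos_iff.2 hv0
  have hder : HasDerivAt (fun t : ℝ => g (x + t • v)) (fderiv ℝ g x v) 0 := by
    have h1 : HasDerivAt (fun t : ℝ => x + t • v) v 0 := by
      simpa using ((hasDerivAt_id (0 : ℝ)).smul_const v).const_add x
    have h2 : HasFDerivAt g (fderiv ℝ g x) (x + (0 : ℝ) • v) := by
      simpa using (hg.differentiable (by norm_num) x).hasFDerivAt
    exact h2.comp_hasDerivAt (0 : ℝ) h1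
  have hpos : ∀ᶠ t : ℝ in nhdsWithin 0 {0}ᶜ, 0 < t⁻¹ * g (x + t • v) := by
    have := hasDerivAt_iff_tendsto_slope.1 hder
    filter_upwards [this.eventually (lt_mem_nhds hv)] with t ht
    simpa [slope_def_field, hgx, div_eq_inv_mul] using ht
  obtain ⟨ε, hε, hball⟩ : ∃ ε > 0, Metric.ball x ε ⊆ V ∩ U :=
    Metric.isOpen_iff.1 (hV.inter hU) x ⟨hxV, hxU⟩
  obtain ⟨δ, hδ, hδs⟩ := Metric.mem_nhdsWithin_iff.1 hpos
  have hrank : 1 < Module.rank ℝ E2 := by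
    rw [← Module.finrank_eq_rank]
    simp
  have hsub : Set.Ioo 0 (min ε (δ * ‖v‖)) ⊆ (fun y => dist y x) '' (V ∩ frontier Ω) := by
    intro r hr
    have hr0 : 0 < r := hr.1
    have hrε : r < ε := hr.2.trans_le (min_le_left _ _)
    have hrδ : r < δ * ‖v‖ := hr.2.trans_le (min_le_right _ _)
    have htpos : 0 < r / ‖v‖ := div_pos hr0 hnv
    have htδ : r / ‖v‖ < δ := by rwa [div_lt_iff₀ hnv]
    have hmem : ∀ t : ℝ, |t| = r / ‖v‖ → 0 < t⁻¹ * g (x + t • v) ∧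
        x + t • v ∈ Metric.sphere x r := by
      intro t ht
      constructor
      · refine hδs ⟨by simpa [ht] using htδ, ?_⟩
        rintro rfl
        simp at ht
        linarith
      · rw [mem_sphere_iff_norm, add_sub_cancel_left, norm_smul, Real.norm_eq_abs, ht]
        field_simp
    obtain ⟨p1, p2⟩ := hmem (r / ‖v‖) (abs_of_pos htpos)
    obtain ⟨n1, n2⟩ := hmem (-(r / ‖v‖)) (by rw [abs_neg, abs_of_pos htpos])
    have p3 : 0 < g (x + (r / ‖v‖) • v) := (pos_iff_pos_of_mul_pos p1).1 (inv_pos.2 htpos)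
    have n3 : g (x + (-(r / ‖v‖)) • v) < 0 :=
      (neg_iff_neg_of_mul_pos n1).1 (inv_lt_zero.2 (by linarith))
    obtain ⟨y, hy, hy0⟩ := (isPreconnected_sphere hrank x r).intermediate_value n2 p2
      hg.continuous.continuousOn ⟨n3.le, p3.le⟩
    have hyVU := hball (show y ∈ Metric.ball x ε by
      rw [Metric.mem_ball, Metric.mem_sphere.1 hy]; exact hrε)
    have hyf : y ∈ frontier Ω ∩ U := by rw [hgz]; exact ⟨hyVU.2, hy0⟩
    exact ⟨y, ⟨hyVU.1, hyf.1⟩, hy⟩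
  exact Set.Infinite.of_image _ ((Set.Ioo_infinite (by positivity)).mono hsub)

/-! ### The Hankel kernel as a function of the squared distance -/

/-- Coefficients of `J₀` as a power series in `z²`. -/
noncomputable def jCoef (m : ℕ) : ℂ := (-1 / 4) ^ m / (m.factorial : ℂ) ^ 2

/-- Coefficients, as a power series in `z²`, of the non-logarithmic series in `Y₀`; the zeroth one
vanishes. -/
noncomputable def hCoef (m : ℕ) : ℂ := (-1 / 4) ^ m * harmSum m / (m.factorial : ℂ) ^ 2

lemma jCoef_ne_zero (m : ℕ) : jCoef m ≠ 0 := by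
  unfold jCoef
  have : (m.factorial : ℂ) ≠ 0 := by exact_mod_cast m.factorial_ne_zero
  exact div_ne_zero (pow_ne_zero _ (by norm_num)) (pow_ne_zero _ this)

lemma norm_harmSum_le (m : ℕ) : ‖harmSum m‖ ≤ m := by
  unfold harmSum
  calc ‖∑ j ∈ Finset.range m, (1 : ℂ) / (j + 1)‖ ≤ ∑ j ∈ Finset.range m, (1 : ℝ) := by
        refine norm_sum_le_of_le _ fun j _ => ?_
        rw [norm_div, norm_one, div_le_one]
        · have : ((j : ℂ) + 1) = ((j + 1 : ℕ) : ℂ) := by push_cast; rfl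
          rw [this, Complex.norm_natCast]
          push_cast; linarith [(Nat.cast_nonneg j : (0 : ℝ) ≤ j)]
        · have : ((j : ℂ) + 1) = ((j + 1 : ℕ) : ℂ) := by push_cast; rfl
          rw [this, Complex.norm_natCast]
          positivity
    _ = m := by simp

lemma goodCoef_of_le {a : ℕ → ℂ} (h : ∀ m, ‖a m‖ * (m.factorial : ℝ) ^ 2 ≤ 1) : GoodCoef a := by
  refine ⟨1, 1, zero_le_one, zero_le_one, fun m => ?_⟩
  have h1 : (1 : ℝ) ≤ m.factorial := by exact_mod_cast m.factorial_pos
  rw [one_pow, one_mul, le_div_iff₀ (by linarith)]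
  refine le_trans ?_ (h m)
  gcongr
  nlinarith

lemma goodCoef_j : GoodCoef jCoef := by
  refine goodCoef_of_le fun m => ?_
  have h1 : (m.factorial : ℝ) ≠ 0 := by positivity
  have : ‖jCoef m‖ = (1 / 4 : ℝ) ^ m / (m.factorial : ℝ) ^ 2 := by
    simp [jCoef]
  rw [this, div_mul_cancel₀ _ (by positivity)]
  exact pow_le_one₀ (by norm_num) (by norm_num)

lemma goodCoef_h : GoodCoef hCoef := by
  refine goodCoef_of_le fun m => ?_
  have : ‖hCoef m‖ = (1 / 4 : ℝ) ^ m * ‖harmSum m‖ / (m.factorial : ℝ) ^ 2 := by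
    simp [hCoef]
  rw [this, div_mul_cancel₀ _ (by positivity)]
  have h2 : (m : ℝ) ≤ 4 ^ m := by
    exact_mod_cast (Nat.lt_pow_self (by norm_num : 1 < 4)).le
  calc (1 / 4 : ℝ) ^ m * ‖harmSum m‖ ≤ (1 / 4) ^ m * 4 ^ m := by
        gcongr
        exact (norm_harmSum_le m).trans h2
    _ = 1 := by rw [← mul_pow]; norm_num

lemma besselJ0_eq (z : ℂ) : besselJ0 z = entSer jCoef (z ^ 2) := by
  unfold besselJ0 entSer jCoef
  refine tsum_congr fun m => ?_
  rw [pow_mul, div_pow, ← mul_pow, div_mul_eq_mul_div, ← mul_pow]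
  congr 2
  ring

lemma besselY0_series_eq (z : ℂ) :
    ∑' m : ℕ, ((-1 : ℂ) ^ (m + 1) * (z / 2) ^ (2 * (m + 1)) * harmSum (m + 1)) /
        (((m + 1).factorial : ℂ)) ^ 2 = entSer hCoef (z ^ 2) := by
  unfold entSer
  rw [(goodCoef_h.summable (z ^ 2)).tsum_eq_zero_add]
  have : hCoef 0 = 0 := by simp [hCoef, harmSum]
  rw [this, zero_mul, zero_add]
  refine tsum_congr fun m => ?_
  unfold hCoef
  rw [pow_mul, ← mul_pow, div_mul_eq_mul_div, mul_right_comm, ← mul_pow]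
  congr 3
  ring

/-- The factor `2i/π` in front of the logarithm in `H₀⁽¹⁾`. -/
noncomputable def cH : ℂ := Complex.I * (2 / Real.pi)

lemma cH_ne_zero : cH ≠ 0 := by
  have : (Real.pi : ℂ) ≠ 0 := by exact_mod_cast Real.pi_ne_zero
  unfold cH
  exact mul_ne_zero Complex.I_ne_zero (div_ne_zero two_ne_zero this)

/-- The part of the coefficient of `J₀` in `H₀⁽¹⁾(k√s)` that does not depend on `k`. -/
noncomputable def bH (s : ℝ) : ℂ :=
  1 + cH * ((Real.eulerMascheroniConstant - Real.log 2 + Real.log s / 2 : ℝ) : ℂ)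

/-- `H₀⁽¹⁾(k√s)` for `k, s > 0`, as a function of the squared distance `s`. -/
noncomputable def radH (k s : ℝ) : ℂ :=
  (Real.log k : ℂ) * (entSer jCoef ((k : ℂ) ^ 2 * s) * cH) +
    (entSer jCoef ((k : ℂ) ^ 2 * s) * bH s - entSer hCoef ((k : ℂ) ^ 2 * s) * cH)

/-- `s` times the derivative of `radH k` at `s`. -/
noncomputable def radH' (k s : ℝ) : ℂ :=
  (Real.log k : ℂ) * (entSer (eulerCoef jCoef) ((k : ℂ) ^ 2 * s) * cH) +
    (entSer (eulerCoef jCoef) ((k : ℂ) ^ 2 * s) * bH s -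
      entSer (eulerCoef hCoef) ((k : ℂ) ^ 2 * s) * cH +
      entSer jCoef ((k : ℂ) ^ 2 * s) * (cH / 2))

lemma hankelH0_eq_radH {k r : ℝ} (hk : 0 < k) (hr : 0 < r) :
    hankelH0 ((k : ℂ) * (r : ℝ)) = radH k (r ^ 2) := by
  have hlog : Complex.log ((k : ℂ) * (r : ℝ) / 2) =
      ((Real.log k + Real.log (r ^ 2) / 2 - Real.log 2 : ℝ) : ℂ) := by
    have : (k : ℂ) * (r : ℝ) / 2 = ((k * r / 2 : ℝ) : ℂ) := by push_cast; rfl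
    rw [this, ← Complex.ofReal_log (by positivity), Real.log_div (by positivity) (by norm_num),
      Real.log_mul hk.ne' hr.ne', Real.log_pow]
    push_cast; ring
  unfold hankelH0 besselY0
  rw [besselY0_series_eq, besselJ0_eq, hlog]
  unfold radH bH cH
  push_cast
  rw [mul_pow]
  ring

lemma hasDerivAt_entSer_real {a : ℕ → ℂ} (ha : GoodCoef a) (κ : ℂ) {s : ℝ} (hs : 0 < s) :
    HasDerivAt (fun s : ℝ => entSer a (κ * s)) ((s : ℂ)⁻¹ * entSer (eulerCoef a) (κ * s)) s := by
  have h1 : HasDerivAt (fun s : ℝ => κ * (s : ℂ)) κ s := by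
    simpa using (Complex.ofRealCLM.hasDerivAt (x := s)).const_mul κ
  have h2 := (ha.hasDerivAt (κ * s)).comp s h1
  rw [ha.entSer_euler]
  have hs' : (s : ℂ) ≠ 0 := by exact_mod_cast hs.ne'
  refine h2.congr_deriv ?_
  field_simp

lemma hasDerivAt_radH (k : ℝ) {s : ℝ} (hs : 0 < s) :
    HasDerivAt (radH k) ((s : ℂ)⁻¹ * radH' k s) s := by
  have hj := hasDerivAt_entSer_real goodCoef_j ((k : ℂ) ^ 2) hs
  have hh := hasDerivAt_entSer_real goodCoef_h ((k : ℂ) ^ 2) hs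
  have hb : HasDerivAt bH ((s : ℂ)⁻¹ * (cH / 2)) s := by
    have h1 : HasDerivAt (fun s : ℝ => Real.eulerMascheroniConstant - Real.log 2 + Real.log s / 2)
        (s⁻¹ / 2) s := ((Real.hasDerivAt_log hs.ne').div_const 2).const_add _
    have h2 := (h1.ofReal_comp.const_mul cH).const_add 1
    refine h2.congr_deriv ?_
    push_cast; ring
  refine (((hj.mul_const cH).const_mul (Real.log k : ℂ)).add
    ((hj.mul hb).sub (hh.mul_const cH))).congr_deriv ?_
  unfold radH'
  ring

lemma continuousOn_bH : ContinuousOn bH (Set.Ioi 0) := by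
  unfold bH
  have : ContinuousOn Real.log (Set.Ioi 0) :=
    Real.continuousOn_log.mono fun s hs => (ne_of_gt hs : s ≠ 0)
  fun_prop

lemma continuousOn_radH' (k : ℝ) : ContinuousOn (fun s : ℝ => (s : ℂ)⁻¹ * radH' k s)
    (Set.Ioi 0) := by
  have hb := continuousOn_bH
  have h1 := goodCoef_j.continuous
  have h2 := goodCoef_j.euler.continuous
  have h3 := goodCoef_h.euler.continuous
  have h4 : ContinuousOn (fun s : ℝ => (s : ℂ)⁻¹) (Set.Ioi 0) :=
    Complex.continuous_ofReal.continuousOn.inv₀ fun s hs => by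
      exact_mod_cast (ne_of_gt hs : s ≠ 0)
  unfold radH'
  fun_prop

/-! ### The gradient of the scattering solution -/

/-- Differentiation under the integral of a kernel depending on the squared distance, at a point
off the compact set of integration. -/
lemma hasFDerivAt_radial {S : Set E2} (hS : IsCompact S) {F : E2 → ℂ} (hF : ContinuousOn F S)
    {φ φ' : ℝ → ℂ} (hφ : ∀ s, 0 < s → HasDerivAt φ (φ' s) s) (hφ' : ContinuousOn φ' (Set.Ioi 0))
    {x₀ : E2} (hx₀ : x₀ ∉ S) :
    ∃ L : E2 →L[ℝ] ℂ, HasFDerivAt (fun x => ∫ y in S, φ (‖x - y‖ ^ 2) * F y) L x₀ ∧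
      ∀ v, L v = ∫ y in S, φ' (‖x₀ - y‖ ^ 2) * F y * ((2 * inner ℝ (x₀ - y) v : ℝ) : ℂ) := by
  have hms := hS.measurableSet
  obtain ⟨ε, hε, hball⟩ := Metric.nhds_basis_closedBall.mem_iff.1
    (hS.isClosed.isOpen_compl.mem_nhds hx₀)
  have hpos : ∀ x ∈ Metric.closedBall x₀ ε, ∀ y ∈ S, 0 < ‖x - y‖ ^ 2 := by
    intro x hx y hy
    have : x - y ≠ 0 := by
      rw [sub_ne_zero]
      rintro rfl
      exact hball hx hy
    positivity
  have hx₀b : x₀ ∈ Metric.closedBall x₀ ε := Metric.mem_closedBall_self hε.le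
  let D : E2 → E2 → E2 →L[ℝ] ℂ := fun x y => (φ' (‖x - y‖ ^ 2) * F y) •
    (Complex.ofRealCLM.comp ((2 : ℝ) • innerSL ℝ (x - y)))
  have hDc : ContinuousOn (fun p : E2 × E2 => D p.1 p.2) (Metric.closedBall x₀ ε ×ˢ S) := by
    have e1 : ContinuousOn (fun p : E2 × E2 => φ' (‖p.1 - p.2‖ ^ 2))
        (Metric.closedBall x₀ ε ×ˢ S) :=
      hφ'.comp (f := fun p : E2 × E2 => ‖p.1 - p.2‖ ^ 2) (by fun_prop)
        fun p hp => hpos _ hp.1 _ hp.2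
    have e2 : ContinuousOn (fun p : E2 × E2 => F p.2) (Metric.closedBall x₀ ε ×ˢ S) :=
      hF.comp (f := fun p : E2 × E2 => p.2) (by fun_prop) fun p hp => hp.2
    have e3 : Continuous fun p : E2 × E2 =>
        Complex.ofRealCLM.comp ((2 : ℝ) • innerSL ℝ (p.1 - p.2)) :=
      continuous_const.clm_comp
        (((innerSL ℝ).continuous.comp (continuous_fst.sub continuous_snd)).const_smul (2 : ℝ))
    exact (e1.mul e2).smul e3.continuousOn
  obtain ⟨M, hM⟩ := ((isCompact_closedBall x₀ ε).prod hS).exists_bound_of_continuousOn hDc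
  have hDx₀ : ContinuousOn (D x₀) S :=
    hDc.comp (f := fun y : E2 => (x₀, y)) (by fun_prop)
      fun y hy => ⟨hx₀b, hy⟩
  have hφc : ∀ x ∈ Metric.closedBall x₀ ε,
      ContinuousOn (fun y => φ (‖x - y‖ ^ 2) * F y) S := by
    intro x hx
    refine ContinuousOn.mul (fun y hy => ?_) hF
    exact ((hφ _ (hpos x hx y hy)).continuousAt.comp
      (f := fun y => ‖x - y‖ ^ 2) (by fun_prop)).continuousWithinAt
  refine ⟨∫ y in S, D x₀ y, ?_, fun v => ?_⟩
  · refine hasFDerivAt_integral_of_dominated_of_fderiv_le (μ := volume.restrict S)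
      (F := fun x y => φ (‖x - y‖ ^ 2) * F y) (F' := D) (bound := fun _ => M)
      (Metric.closedBall_mem_nhds x₀ hε) ?_ ?_ ?_ ?_ ?_ ?_
    · filter_upwards [Metric.closedBall_mem_nhds x₀ hε] with x hx
      exact (hφc x hx).aestronglyMeasurable hms
    · exact (hφc x₀ hx₀b).integrableOn_compact hS
    · exact hDx₀.aestronglyMeasurable hms
    · exact (ae_restrict_iff' hms).2 (Eventually.of_forall fun y hy x hx => hM (x, y) ⟨hx, hy⟩)
    · exact continuousOn_const.integrableOn_compact hS
    · refine (ae_restrict_iff' hms).2 (Eventually.of_forall fun y hy x hx => ?_)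
      have h1 : HasFDerivAt (fun x : E2 => ‖x - y‖ ^ 2) ((2 : ℝ) • innerSL ℝ (x - y)) x := by
        have h0 : HasFDerivAt (fun x : E2 => x - y) (ContinuousLinearMap.id ℝ E2) x :=
          (hasFDerivAt_id x).sub_const y
        refine h0.norm_sq.congr_fderiv ?_
        ext v
        simp [two_smul]
      refine (((hφ _ (hpos x hx y hy)).hasFDerivAt.comp x h1).mul_const (F y)).congr_fderiv ?_
      ext v
      simp [D]
      ring
  · rw [ContinuousLinearMap.integral_apply (hDx₀.integrableOn_compact hS)]
    rfl

/-! ### From Cauchy data to moments -/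

lemma scatSol_eq {Ω S : Set E2} (hΩ : MeasurableSet Ω) (hSΩ : S ⊆ Ω) {f₀ f₁ : E2 → ℝ}
    (h₀ : ∀ y ∉ S, f₀ y = 0) (h₁ : ∀ y ∉ S, f₁ y = 0) (hS : MeasurableSet S)
    {k : ℝ} (hk : 0 < k) {x : E2} (hx : x ∉ S) :
    scatSol Ω f₀ f₁ x (k : ℂ) = (-Complex.I / 4) *
      ∫ y in S, radH k (‖x - y‖ ^ 2) * ((f₁ y : ℂ) + Complex.I * k * (f₀ y : ℂ)) := by
  unfold scatSol
  congr 1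
  rw [setIntegral_eq_of_subset_of_forall_sdiff_eq_zero hΩ hSΩ
    (fun y hy => by simp [h₀ y hy.2, h₁ y hy.2])]
  refine setIntegral_congr_fun hS fun y hy => ?_
  have hr : 0 < ‖x - y‖ := by
    rw [norm_pos_iff, sub_ne_zero]
    rintro rfl
    exact hx hy
  rw [hankelH0_eq_radH hk hr]

/-- Cauchy data vanishing at one point `x` off the supports, for an interval of wave numbers, force
the vanishing of the moments of `|x - y|^{2m}` and of `|x - y|^{2m} (x - y)`. -/
lemma moments_of_cauchy_data {S : Set E2} (hS : IsCompact S) {f₀ f₁ : E2 → ℝ}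
    (hf₀ : Continuous f₀) (hf₁ : Continuous f₁) {p q : ℝ} (hp : 0 < p) (hpq : p < q)
    {x : E2} (hx : x ∉ S)
    (hval : ∀ k ∈ Set.Ioo p q,
      ∫ y in S, radH k (‖x - y‖ ^ 2) * ((f₁ y : ℂ) + Complex.I * k * (f₀ y : ℂ)) = 0)
    (hgrad : ∀ k ∈ Set.Ioo p q, ∀ v : E2,
      ∫ y in S, (((‖x - y‖ ^ 2 : ℝ) : ℂ)⁻¹ * radH' k (‖x - y‖ ^ 2)) *
        ((f₁ y : ℂ) + Complex.I * k * (f₀ y : ℂ)) * ((2 * inner ℝ (x - y) v : ℝ) : ℂ) = 0)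
    (m : ℕ) :
    (∫ y in S, ((‖x - y‖ ^ 2 : ℝ) : ℂ) ^ m * (f₁ y : ℂ) = 0 ∧
      ∫ y in S, ((‖x - y‖ ^ 2 : ℝ) : ℂ) ^ m * (f₀ y : ℂ) = 0) ∧
    ∀ v : E2, ∫ y in S, ((‖x - y‖ ^ 2 : ℝ) : ℂ) ^ m * (((inner ℝ (x - y) v : ℝ) : ℂ) * f₁ y) = 0 ∧
      ∫ y in S, ((‖x - y‖ ^ 2 : ℝ) : ℂ) ^ m * (((inner ℝ (x - y) v : ℝ) : ℂ) * f₀ y) = 0 := by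
  have hms := hS.measurableSet
  have hpos : ∀ y ∈ S, 0 < ‖x - y‖ ^ 2 := by
    intro y hy
    have : x - y ≠ 0 := by
      rw [sub_ne_zero]
      rintro rfl
      exact hx hy
    positivity
  have hs : ContinuousOn (fun y => ‖x - y‖ ^ 2) S := by fun_prop
  have hb : ContinuousOn (fun y => bH (‖x - y‖ ^ 2)) S := continuousOn_bH.comp hs hpos
  constructor
  · have key := moments_of_log_kernel hS hs hf₀.continuousOn hf₁.continuousOn goodCoef_j
      (c := fun _ => cH) continuousOn_const (b := ![jCoef, hCoef, jCoef])
      (fun i => by fin_cases i; exacts [goodCoef_j, goodCoef_h, goodCoef_j])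
      (d := ![fun y => bH (‖x - y‖ ^ 2), fun _ => -cH, fun _ => 0])
      (fun i => by fin_cases i; exacts [hb, continuousOn_const, continuousOn_const]) hp hpq
      (fun k hk => by
        refine (setIntegral_congr_fun hms fun y _ => ?_).trans (hval k hk)
        simp only [Fin.sum_univ_three, radH, Matrix.cons_val_zero, Matrix.cons_val_one,
          Matrix.cons_val]
        ring) m (jCoef_ne_zero m)
    have hout : ∀ f : E2 → ℝ, ∫ y in S, ((‖x - y‖ ^ 2 : ℝ) : ℂ) ^ m * (cH * f y) = 0 →
        ∫ y in S, ((‖x - y‖ ^ 2 : ℝ) : ℂ) ^ m * (f y : ℂ) = 0 := by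
      intro f h
      simp_rw [mul_left_comm _ cH] at h
      rw [integral_const_mul] at h
      exact (mul_eq_zero.1 h).resolve_left cH_ne_zero
    exact ⟨hout f₁ key.1, hout f₀ key.2⟩
  · intro v
    -- one power of `s` is spent on the factor `s⁻¹` in the derivative of the kernel
    have hs' : ContinuousOn (fun y => ((‖x - y‖ ^ 2 : ℝ) : ℂ)) S :=
      Complex.continuous_ofReal.comp_continuousOn hs
    have hne : ∀ y ∈ S, ((‖x - y‖ ^ 2 : ℝ) : ℂ) ≠ 0 := fun y hy => by
      exact_mod_cast (hpos y hy).ne'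
    have hg : ContinuousOn (fun y => ((‖x - y‖ ^ 2 : ℝ) : ℂ)⁻¹ *
        ((2 * inner ℝ (x - y) v : ℝ) : ℂ)) S := (hs'.inv₀ hne).mul (by fun_prop)
    have key := moments_of_log_kernel hS hs hf₀.continuousOn hf₁.continuousOn goodCoef_j.euler
      (c := fun y => cH * (((‖x - y‖ ^ 2 : ℝ) : ℂ)⁻¹ * ((2 * inner ℝ (x - y) v : ℝ) : ℂ)))
      (continuousOn_const.mul hg) (b := ![eulerCoef jCoef, eulerCoef hCoef, jCoef])
      (fun i => by fin_cases i; exacts [goodCoef_j.euler, goodCoef_h.euler, goodCoef_j])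
      (d := ![fun y => bH (‖x - y‖ ^ 2) *
          (((‖x - y‖ ^ 2 : ℝ) : ℂ)⁻¹ * ((2 * inner ℝ (x - y) v : ℝ) : ℂ)),
        fun y => -cH * (((‖x - y‖ ^ 2 : ℝ) : ℂ)⁻¹ * ((2 * inner ℝ (x - y) v : ℝ) : ℂ)),
        fun y => cH / 2 * (((‖x - y‖ ^ 2 : ℝ) : ℂ)⁻¹ * ((2 * inner ℝ (x - y) v : ℝ) : ℂ))])
      (fun i => by
        fin_cases i
        exacts [hb.mul hg, continuousOn_const.mul hg, continuousOn_const.mul hg]) hp hpq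
      (fun k hk => by
        refine (setIntegral_congr_fun hms fun y _ => ?_).trans (hgrad k hk v)
        simp only [Fin.sum_univ_three, radH', Matrix.cons_val_zero, Matrix.cons_val_one,
          Matrix.cons_val]
        ring) (m + 1)
      (mul_ne_zero (by exact_mod_cast Nat.succ_ne_zero m) (jCoef_ne_zero (m + 1)))
    have hout : ∀ f : E2 → ℝ, ∫ y in S, ((‖x - y‖ ^ 2 : ℝ) : ℂ) ^ (m + 1) *
        (cH * (((‖x - y‖ ^ 2 : ℝ) : ℂ)⁻¹ * ((2 * inner ℝ (x - y) v : ℝ) : ℂ)) * f y) = 0 →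
        ∫ y in S, ((‖x - y‖ ^ 2 : ℝ) : ℂ) ^ m * (((inner ℝ (x - y) v : ℝ) : ℂ) * f y) = 0 := by
      intro f h
      rw [setIntegral_congr_fun hms (g := fun y => (cH * 2) *
        (((‖x - y‖ ^ 2 : ℝ) : ℂ) ^ m * (((inner ℝ (x - y) v : ℝ) : ℂ) * f y)))
        (fun y hy => by
          have := hne y hy
          simp only
          rw [Complex.ofReal_mul, Complex.ofReal_ofNat, pow_succ]
          generalize ((‖x - y‖ ^ 2 : ℝ) : ℂ) = s at this ⊢
          field_simp), integral_const_mul] at h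
      exact (mul_eq_zero.1 h).resolve_left (mul_ne_zero cH_ne_zero two_ne_zero)
    exact ⟨hout f₁ key.1, hout f₀ key.2⟩

/-- The real moments at the points of an infinite set, written in the complex coordinate, are the
centred moments of bidegree `(m, m)` and `(m + 1, m)`; they determine `f`. -/
lemma eq_zero_of_point_moments {S : Set E2} (hS : IsCompact S) {f : E2 → ℝ} (hf : Continuous f)
    (hsupp : ∀ y ∉ S, f y = 0) {Γ : Set E2} (hΓ : Γ.Infinite)
    (h0 : ∀ x ∈ Γ, ∀ m : ℕ, ∫ y in S, ((‖x - y‖ ^ 2 : ℝ) : ℂ) ^ m * (f y : ℂ) = 0)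
    (h1 : ∀ x ∈ Γ, ∀ m : ℕ, ∀ v : E2,
      ∫ y in S, ((‖x - y‖ ^ 2 : ℝ) : ℂ) ^ m * (((inner ℝ (x - y) v : ℝ) : ℂ) * f y) = 0) :
    ∀ x, f x = 0 := by
  refine eq_zero_of_moments hS hf hsupp
    (cMoment_eq_zero hS hf (hΓ.image toC_injective.injOn) ?_ ?_)
  · rintro _ ⟨x, hx, rfl⟩ m
    rw [← h0 x hx m]
    refine integral_congr_ae (Eventually.of_forall fun y => ?_)
    simp only
    rw [← toC_sub, ← mul_pow, toC_mul_conj]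
  · rintro _ ⟨x, hx, rfl⟩ m
    have e0 := h1 x hx m (EuclideanSpace.single 0 1)
    have e1 := h1 x hx m (EuclideanSpace.single 1 1)
    have hint : ∀ v : E2, IntegrableOn (fun y =>
        ((‖x - y‖ ^ 2 : ℝ) : ℂ) ^ m * (((inner ℝ (x - y) v : ℝ) : ℂ) * f y)) S := fun v =>
      (by fun_prop : Continuous fun y : E2 => ((‖x - y‖ ^ 2 : ℝ) : ℂ) ^ m *
        (((inner ℝ (x - y) v : ℝ) : ℂ) * f y)).continuousOn.integrableOn_compact hS
    have e : ∫ y in S, (((‖x - y‖ ^ 2 : ℝ) : ℂ) ^ m *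
          (((inner ℝ (x - y) (EuclideanSpace.single 0 1) : ℝ) : ℂ) * f y) + Complex.I *
        (((‖x - y‖ ^ 2 : ℝ) : ℂ) ^ m *
          (((inner ℝ (x - y) (EuclideanSpace.single 1 1) : ℝ) : ℂ) * f y))) = 0 := by
      rw [integral_add (hint _) ((hint _).const_mul _), integral_const_mul, e0, e1]
      simp
    rw [← e]
    refine integral_congr_ae (Eventually.of_forall fun y => ?_)
    simp only
    rw [← toC_sub, pow_succ, mul_right_comm (toC (x - y) ^ m), ← mul_pow, toC_mul_conj,
      toC_eq, EuclideanSpace.inner_single_right, EuclideanSpace.inner_single_right]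
    simp
    ring

end SourceUniq

/-- **Uniqueness of source identification** (Theorem 2.1): if the scattering solution and its
spatial gradient vanish on a nonempty relatively open piece `Γ` of `∂Ω` for all wave numbers
`k ∈ (K*, K)`, then `f₀ = f₁ = 0` on `Ω`. -/
theorem source_uniqueness
    (Ω : Set E2) (hΩo : IsOpen Ω) (hΩb : Bornology.IsBounded Ω) (hΩ2 : HasC2Boundary Ω)
    (f₀ f₁ : E2 → ℝ) (hf₀ : ContDiff ℝ 1 f₀) (hf₁ : Continuous f₁)
    (hc₀ : HasCompactSupport f₀) (hc₁ : HasCompactSupport f₁)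
    (hs₀ : tsupport f₀ ⊆ Ω) (hs₁ : tsupport f₁ ⊆ Ω)
    (Kstar K : ℝ) (hK0 : 0 < Kstar) (hKK : Kstar < K)
    (Γ : Set E2) (hΓne : Γ.Nonempty)
    (hΓopen : ∃ V : Set E2, IsOpen V ∧ Γ = V ∩ frontier Ω)
    (hvanish : ∀ k ∈ Set.Ioo Kstar K, ∀ x ∈ Γ,
      scatSol Ω f₀ f₁ x (k : ℂ) = 0 ∧
        fderiv ℝ (fun x' => scatSol Ω f₀ f₁ x' (k : ℂ)) x = 0) :
    ∀ x ∈ Ω, f₀ x = 0 ∧ f₁ x = 0 := by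
  set S : Set E2 := tsupport f₀ ∪ tsupport f₁ with hSdef
  have hS : IsCompact S := IsCompact.union hc₀ hc₁
  have hSΩ : S ⊆ Ω := Set.union_subset hs₀ hs₁
  have h₀ : ∀ y ∉ S, f₀ y = 0 := fun y hy =>
    image_eq_zero_of_notMem_tsupport fun h => hy (Or.inl h)
  have h₁ : ∀ y ∉ S, f₁ y = 0 := fun y hy =>
    image_eq_zero_of_notMem_tsupport fun h => hy (Or.inr h)
  obtain ⟨V, hV, rfl⟩ := hΓopen
  have hinf := SourceUniq.infinite_of_C2Boundary hΩ2 hV hΓne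
  have hmom : ∀ x ∈ V ∩ frontier Ω, ∀ m : ℕ, _ := fun x hx m => by
    have hxS : x ∉ S := fun h => by
      have hfr := hx.2
      rw [hΩo.frontier_eq] at hfr
      exact hfr.2 (hSΩ h)
    have hI : (-Complex.I / 4 : ℂ) ≠ 0 :=
      div_ne_zero (neg_ne_zero.2 Complex.I_ne_zero) (by norm_num)
    have hpos : ∀ k ∈ Set.Ioo Kstar K, 0 < k := fun k hk => hK0.trans hk.1
    refine SourceUniq.moments_of_cauchy_data hS hf₀.continuous hf₁ hK0 hKK hxS
      (fun k hk => ?_) (fun k hk v => ?_) m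
    · have h := (hvanish k hk x hx).1
      rw [SourceUniq.scatSol_eq hΩo.measurableSet hSΩ h₀ h₁ hS.measurableSet (hpos k hk) hxS] at h
      exact (mul_eq_zero.1 h).resolve_left hI
    · obtain ⟨L, hL, hLv⟩ := SourceUniq.hasFDerivAt_radial hS
        (F := fun y => (f₁ y : ℂ) + Complex.I * k * (f₀ y : ℂ))
        (by have := hf₀.continuous; fun_prop)
        (fun s hs => SourceUniq.hasDerivAt_radH k hs) (SourceUniq.continuousOn_radH' k) hxS
      rw [← hLv v]
      -- true differentiability of `u` is needed, `fderiv` being zero by convention otherwise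
      have hu : HasFDerivAt (fun x' => scatSol Ω f₀ f₁ x' (k : ℂ)) ((-Complex.I / 4 : ℂ) • L) x := by
        refine (hL.const_mul (-Complex.I / 4)).congr_of_eventuallyEq ?_
        filter_upwards [hS.isClosed.isOpen_compl.mem_nhds hxS] with x' hx'
        exact SourceUniq.scatSol_eq hΩo.measurableSet hSΩ h₀ h₁ hS.measurableSet (hpos k hk) hx'
      have hz := hu.fderiv.symm.trans (hvanish k hk x hx).2
      have := DFunLike.congr_fun hz v
      simp only [smul_apply, smul_eq_mul,
        zero_apply] at this
      exact (mul_eq_zero.1 this).resolve_left hI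
  intro x _
  exact ⟨SourceUniq.eq_zero_of_point_moments hS hf₀.continuous h₀ hinf
      (fun x hx m => (hmom x hx m).1.2) (fun x hx m v => ((hmom x hx m).2 v).2) x,
    SourceUniq.eq_zero_of_point_moments hS hf₁ h₁ hinf
      (fun x hx m => (hmom x hx m).1.1) (fun x hx m v => ((hmom x hx m).2 v).1) x⟩
end

section
/- Let Ω be a bounded open subset of ℝ² with C² boundary, d = diam Ω, and let f₀, f₁ be continuously differentiable real-valued functions with compact supports contained in Ω. Then for every k = k₁ + ik₂ ∈ ℂ with k₁ = Re k > 0, |I₁(k)| ≤ (π/2)|∂Ω| d ( (1/3)|k|³ ‖f₁‖²_{(0)} + (1/5)|k|⁵ ‖f₀‖²_{(0)} ) e^{2d|k₂|}/k₁. -/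
/-!
The point is the bound `|H₀⁽¹⁾(z)| ≤ e^{|Im z|} √(2 / (π Re z))` for `Re z > 0`, together with the same
bound for `H̄₀⁽¹⁾(z)`, which is the complex conjugate of `H₀⁽¹⁾` at `z̄`
(`norm_hankelH0_le`, `norm_hankelH0bar_le`).

It comes from the integral representation `H₀⁽¹⁾(z) = -(2i/π) ∫ e^{-zτ} (τ² + 1)^{-1/2} dτ`, taken along
the ray `τ = s - i`, `s > 0` (`hankelH0_eq_rayF`). On this ray `|τ² + 1| ≥ 2s`, so the integral is at
most `e^{-Im z} ∫ e^{-s Re z} (2s)^{-1/2} ds`. Since `H₀⁽¹⁾` is given by its power series, the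
representation has to be proved. Both sides solve Bessel's equation, and as `x → 0` along the positive
axis both equal `1 + (2i/π)(γ + log (x/2))` up to an error tending to `0` (`hankelH0_asymp`,
`rayF_asymp`, the latter through `Γ'(1) = -γ`). A solution of Bessel's equation tending to `0` at the
origin vanishes (`frobenius_unique`), so the two sides agree near the origin of the positive axis, and
by the identity theorem in the half-plane.

Let `ω = ks` with `0 < s < 1`, and let `x ∈ ∂Ω`. By Cauchy–Schwarz, `∫_{|x-y| ≤ d} |x-y|⁻¹ dy = 2πd` and
`|f₁ ± iωf₀|² ≤ 2(f₁² + |ω|² f₀²)`, the product of the two potentials in `I₁` is at most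
`d e^{2d|k₂|} / (2 s k₁) · (‖f₁‖² + |k|² s² ‖f₀‖²)` (`norm_hankel_layer_le`). Integrating over `∂Ω`, which
has finite length (`frontier_finite`), and then against `2|k| |ks|² ds` gives
`|∂Ω| d (|k|³ ‖f₁‖² / 2 + |k|⁵ ‖f₀‖² / 4) e^{2d|k₂|} / k₁`. This suffices because `1/2 ≤ π/6` and
`1/4 ≤ π/10`.
-/

open MeasureTheory Real Complex Filter

/-! ### Finite length of a `C²` boundary -/

/-- Near a boundary point the map `v ↦ v₀ b - v₁ a`, where `(a, b)` is the gradient of the defining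
function, is injective on the boundary with a Lipschitz inverse, so the boundary is locally a
Lipschitz image of a bounded subset of the line. -/
theorem frontier_local_finite (Ω : Set E2) (h2 : HasC2Boundary Ω) (x : E2) (hx : x ∈ frontier Ω) :
    Measure.FiniteAtFilter (μH[1] : Measure E2) (nhdsWithin x (frontier Ω)) := by
  obtain ⟨U, g, hU, hxU, hg, hne, -, hfr⟩ := h2 x hx
  have hst : HasStrictFDerivAt g (fderiv ℝ g x) x :=
    hg.contDiffAt.hasStrictFDerivAt (by norm_num)
  have hL := hne x hxU
  set L := fderiv ℝ g x with hLdef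
  set a : ℝ := L (EuclideanSpace.single 0 1) with ha
  set b : ℝ := L (EuclideanSpace.single 1 1) with hb
  have hLv : ∀ v : E2, L v = v 0 * a + v 1 * b := by
    intro v
    have hv : v = v 0 • EuclideanSpace.single (0 : Fin 2) (1 : ℝ)
        + v 1 • EuclideanSpace.single (1 : Fin 2) (1 : ℝ) := by
      ext i; fin_cases i <;> simp
    conv_lhs => rw [hv]
    simp [ha, hb]
  have hpos : 0 < a ^ 2 + b ^ 2 := by
    rcases eq_or_ne a 0 with h0 | h0
    · rcases eq_or_ne b 0 with h1 | h1
      · exact absurd (ContinuousLinearMap.ext fun v => by simp [hLv, h0, h1]) hL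
      · positivity
    · positivity
  set l : ℝ := √(a ^ 2 + b ^ 2) with hl
  have hlpos : 0 < l := Real.sqrt_pos.2 hpos
  have hl2 : l ^ 2 = a ^ 2 + b ^ 2 := Real.sq_sqrt hpos.le
  -- the coordinate along the tangent line
  set P : E2 → ℝ := fun v => v 0 * b - v 1 * a with hP
  have hnorm : ∀ v : E2, ‖v‖ ^ 2 = v 0 ^ 2 + v 1 ^ 2 := by
    intro v; simp [EuclideanSpace.norm_sq_eq, Fin.sum_univ_two]
  have hPL : ∀ v : E2, P v ^ 2 + L v ^ 2 = l ^ 2 * ‖v‖ ^ 2 := by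
    intro v; rw [hnorm, hl2, hLv]; ring
  have hev := hst.isLittleO.def (half_pos hlpos)
  have hU' : ∀ᶠ p : E2 × E2 in nhds (x, x), p.1 ∈ U ∧ p.2 ∈ U :=
    (hU.prod hU).mem_nhds ⟨hxU, hxU⟩
  obtain ⟨r, hr, hball⟩ := Metric.eventually_nhds_iff_ball.1 (hev.and hU')
  set S := frontier Ω ∩ Metric.ball x r with hS
  have hanti : ∀ p ∈ S, ∀ q ∈ S, l / 2 * ‖p - q‖ ≤ |P p - P q| := by
    intro p hp q hq
    have hpq : (p, q) ∈ Metric.ball (x, x) r := by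
      rw [← ball_prod_same]; exact ⟨hp.2, hq.2⟩
    obtain ⟨h1, hpU, hqU⟩ := hball _ hpq
    have hgp : g p = 0 := (hfr.subset ⟨hp.1, hpU⟩).2
    have hgq : g q = 0 := (hfr.subset ⟨hq.1, hqU⟩).2
    simp only [hgp, hgq, sub_self, zero_sub, norm_neg] at h1
    have h3 := hPL (p - q)
    have h4 : P (p - q) = P p - P q := by simp [hP]; ring
    rw [h4] at h3
    have h5 : L (p - q) ^ 2 ≤ (l / 2 * ‖p - q‖) ^ 2 := by
      rw [← sq_abs]; exact pow_le_pow_left₀ (abs_nonneg _) h1 2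
    apply le_of_sq_le_sq _ (abs_nonneg _)
    rw [sq_abs]
    nlinarith [sq_nonneg (l * ‖p - q‖)]
  have hinj : Set.InjOn P S := by
    intro p hp q hq h
    have := hanti p hp q hq
    rw [h, sub_self, abs_zero] at this
    have h6 : ‖p - q‖ ≤ 0 := by
      by_contra! hc
      nlinarith [mul_pos (half_pos hlpos) hc]
    exact sub_eq_zero.1 (norm_le_zero_iff.1 h6)
  have hLip : LipschitzOnWith (Real.toNNReal (2 / l)) (Function.invFunOn P S) (P '' S) := by
    apply LipschitzOnWith.of_dist_le_mul
    rintro _ ⟨p, hp, rfl⟩ _ ⟨q, hq, rfl⟩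
    rw [hinj.leftInvOn_invFunOn hp, hinj.leftInvOn_invFunOn hq, Real.coe_toNNReal _ (by positivity),
      dist_eq_norm, Real.dist_eq]
    have := hanti p hp q hq
    calc ‖p - q‖ = 2 / l * (l / 2 * ‖p - q‖) := by field_simp
      _ ≤ _ := by gcongr
  have himg : Function.invFunOn P S '' (P '' S) = S := hinj.invFunOn_image subset_rfl
  have hPc : Continuous P := by fun_prop
  have hbdd : Bornology.IsBounded (P '' S) := by
    have : IsCompact (P '' Metric.closedBall x r) :=
      (isCompact_closedBall x r).image hPc
    exact this.isBounded.subset (Set.image_mono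
      (Set.inter_subset_right.trans Metric.ball_subset_closedBall))
  refine ⟨S, inter_mem_nhdsWithin _ (Metric.ball_mem_nhds x hr), ?_⟩
  have h7 := hLip.hausdorffMeasure_image_le (zero_le_one)
  rw [himg, hausdorffMeasure_real] at h7
  refine h7.trans_lt (ENNReal.mul_lt_top ?_ hbdd.measure_lt_top)
  simp

/-- A bounded set with `C²` boundary has finite perimeter. Without this, the Hausdorff measure in the
claimed bound could be infinite, and its `toReal` would be the junk value `0`. -/
theorem frontier_finite (Ω : Set E2) (hb : Bornology.IsBounded Ω) (h2 : HasC2Boundary Ω) :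
    (μH[1] : Measure E2) (frontier Ω) < ⊤ := by
  have hc : IsCompact (frontier Ω) :=
    Metric.isCompact_of_isClosed_isBounded isClosed_frontier (hb.closure.subset frontier_subset_closure)
  exact hc.measure_lt_top_of_nhdsWithin fun x hx => frontier_local_finite Ω h2 x hx

/-! ### The Hankel function: power series, Bessel's equation, behaviour at the origin -/

/-- The even power series `∑ c m z^(2m)`. -/
noncomputable def evenSeries (c : ℕ → ℂ) (z : ℂ) : ℂ := ∑' m : ℕ, c m * z ^ (2 * m)

/-- The series with coefficients `c` has infinite radius of convergence. -/
def EntireCoeff (c : ℕ → ℂ) : Prop := ∀ R : ℝ, 0 ≤ R → Summable fun m => ‖c m‖ * R ^ m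

theorem EntireCoeff.natMul {c : ℕ → ℂ} (hc : EntireCoeff c) :
    EntireCoeff fun m => 2 * m * c m := by
  intro R hR
  refine Summable.of_nonneg_of_le (fun m => by positivity) (fun m => ?_)
    ((hc (2 * R) (by positivity)).mul_left 2)
  have h : (m : ℝ) ≤ 2 ^ m := by exact_mod_cast Nat.lt_two_pow_self.le
  simp only [norm_mul, Complex.norm_ofNat, Complex.norm_natCast]
  rw [mul_pow]
  calc 2 * (m : ℝ) * ‖c m‖ * R ^ m ≤ 2 * 2 ^ m * ‖c m‖ * R ^ m := by gcongr
    _ = _ := by ring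

theorem EntireCoeff.summable {c : ℕ → ℂ} (hc : EntireCoeff c) (z : ℂ) :
    Summable fun m => c m * z ^ (2 * m) := by
  apply Summable.of_norm
  have := hc (‖z‖ ^ 2) (by positivity)
  simpa [pow_mul] using this

/-- Multiplying the derivative by `z` keeps an even series even, which also covers `z = 0`. -/
theorem EntireCoeff.hasDerivAt {c : ℕ → ℂ} (hc : EntireCoeff c) (z : ℂ) :
    HasDerivAt (evenSeries c) (deriv (evenSeries c) z) z ∧
      z * deriv (evenSeries c) z = evenSeries (fun m => 2 * m * c m) z := by
  have hu := hc ((‖z‖ + 1) ^ 2) (by positivity)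
  have hdiff : ∀ m : ℕ, DifferentiableOn ℂ (fun w : ℂ => c m * w ^ (2 * m))
      (Metric.ball 0 (‖z‖ + 1)) := fun m => by fun_prop
  have hbd : ∀ (m : ℕ) (w : ℂ), w ∈ Metric.ball (0 : ℂ) (‖z‖ + 1) →
      ‖c m * w ^ (2 * m)‖ ≤ ‖c m‖ * ((‖z‖ + 1) ^ 2) ^ m := by
    intro m w hw
    rw [mem_ball_zero_iff] at hw
    rw [norm_mul, norm_pow, ← pow_mul]
    gcongr
  have hz : z ∈ Metric.ball (0 : ℂ) (‖z‖ + 1) := by simp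
  refine ⟨((differentiableOn_tsum_of_summable_norm hu hdiff Metric.isOpen_ball hbd).differentiableAt
    (Metric.isOpen_ball.mem_nhds hz)).hasDerivAt, ?_⟩
  have h := (hasSum_deriv_of_summable_norm hu hdiff Metric.isOpen_ball hbd hz).mul_left z
  refine h.tsum_eq.symm.trans (tsum_congr fun m => ?_)
  have : deriv (fun w : ℂ => c m * w ^ (2 * m)) z = c m * ((2 * m : ℕ) * z ^ (2 * m - 1)) := by
    simp
  rw [this]
  rcases m with _ | m
  · simp
  · have : 2 * (m + 1) - 1 = 2 * m + 1 := by omega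
    rw [this]; push_cast; ring

/-- Away from the origin, `z d/dz` multiplies the `m`-th coefficient by `2m`. -/
theorem EntireCoeff.hasDerivAt_div {c : ℕ → ℂ} (hc : EntireCoeff c) {z : ℂ} (hz : z ≠ 0) :
    HasDerivAt (evenSeries c) (evenSeries (fun m => 2 * m * c m) z / z) z := by
  obtain ⟨h1, h2⟩ := hc.hasDerivAt z
  rw [← h2, mul_div_cancel_left₀ _ hz]; exact h1

/-- Coefficients of `J₀`. -/
noncomputable def coeffJ (m : ℕ) : ℂ := (-1) ^ m / (4 ^ m * (m.factorial : ℂ) ^ 2)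

/-- Coefficients of the power series part of `Y₀`. -/
noncomputable def coeffS (m : ℕ) : ℂ := coeffJ m * harmSum m

theorem norm_harmSum_le (m : ℕ) : ‖harmSum m‖ ≤ m := by
  unfold harmSum
  refine (norm_sum_le _ _).trans ?_
  calc ∑ j ∈ Finset.range m, ‖(1 : ℂ) / (j + 1)‖ ≤ ∑ j ∈ Finset.range m, (1 : ℝ) := by
        refine Finset.sum_le_sum fun j _ => ?_
        have h : ‖((j : ℂ) + 1)‖ = j + 1 := by exact_mod_cast Complex.norm_natCast (j + 1)
        rw [norm_div, norm_one, h, div_le_one (by positivity)]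
        linarith [(Nat.cast_nonneg j : (0 : ℝ) ≤ j)]
    _ = m := by simp

theorem norm_coeffJ_le (m : ℕ) : ‖coeffJ m‖ ≤ 1 / m.factorial := by
  have h1 : (1 : ℝ) ≤ 4 ^ m := one_le_pow₀ (by norm_num)
  have h2 : (1 : ℝ) ≤ m.factorial := by exact_mod_cast m.factorial_pos
  simp only [coeffJ, norm_div, norm_mul, norm_pow, norm_neg, norm_one, one_pow,
    Complex.norm_ofNat, Complex.norm_natCast]
  apply one_div_le_one_div_of_le (by positivity)
  nlinarith

theorem entire_coeffJ : EntireCoeff coeffJ := by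
  intro R hR
  refine Summable.of_nonneg_of_le (fun m => by positivity) (fun m => ?_)
    (Real.summable_pow_div_factorial R)
  calc ‖coeffJ m‖ * R ^ m ≤ 1 / m.factorial * R ^ m := by gcongr; exact norm_coeffJ_le m
    _ = _ := by ring

theorem entire_coeffS : EntireCoeff coeffS := by
  intro R hR
  refine Summable.of_nonneg_of_le (fun m => by positivity) (fun m => ?_)
    (entire_coeffJ.natMul R hR)
  simp only [coeffS, norm_mul, Complex.norm_ofNat, Complex.norm_natCast]
  refine mul_le_mul_of_nonneg_right ?_ (pow_nonneg hR m)
  nlinarith [mul_le_mul_of_nonneg_left (norm_harmSum_le m) (norm_nonneg (coeffJ m)),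
    mul_nonneg (norm_nonneg (coeffJ m)) (Nat.cast_nonneg m : (0 : ℝ) ≤ m)]

theorem besselJ0_eq (z : ℂ) : besselJ0 z = evenSeries coeffJ z := by
  unfold besselJ0 evenSeries coeffJ
  congr 1; ext m
  rw [div_pow, pow_mul 2 2 m]; norm_num
  field_simp

theorem tsum_eq_evenSeries_coeffS (z : ℂ) :
    ∑' m : ℕ, ((-1 : ℂ) ^ (m + 1) * (z / 2) ^ (2 * (m + 1)) * harmSum (m + 1)) /
        (((m + 1).factorial : ℂ)) ^ 2 = evenSeries coeffS z := by
  rw [evenSeries, (entire_coeffS.summable z).tsum_eq_zero_add]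
  have : coeffS 0 = 0 := by simp [coeffS, harmSum]
  rw [this, zero_mul, zero_add]
  congr 1; ext m
  unfold coeffS coeffJ
  rw [div_pow, pow_mul 2 2 (m + 1)]; norm_num
  field_simp

theorem coeffJ_succ (m : ℕ) : 2 * ((m + 1 : ℕ) : ℂ) * (2 * ((m + 1 : ℕ) : ℂ) * coeffJ (m + 1))
    = - coeffJ m := by
  unfold coeffJ
  have h1 : ((m : ℂ) + 1) ≠ 0 := Nat.cast_add_one_ne_zero m
  have h2 : (m.factorial : ℂ) ≠ 0 := by exact_mod_cast m.factorial_ne_zero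
  rw [Nat.factorial_succ]; push_cast
  field_simp
  ring

/-- Bessel's equation for `J₀`: `(z d/dz)² J₀ = -z² J₀`. -/
theorem euler_sq_J (z : ℂ) :
    evenSeries (fun m => 2 * m * (2 * m * coeffJ m)) z = -z ^ 2 * evenSeries coeffJ z := by
  rw [evenSeries, (entire_coeffJ.natMul.natMul.summable z).tsum_eq_zero_add, evenSeries,
    ← tsum_mul_left]
  simp only [Nat.cast_zero, mul_zero, zero_mul, zero_add]
  congr 1; ext m
  rw [coeffJ_succ]; ring

theorem harmSum_succ (m : ℕ) : harmSum (m + 1) = harmSum m + 1 / ((m + 1 : ℕ) : ℂ) := by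
  simp [harmSum, Finset.sum_range_succ]

/-- The inhomogeneous Bessel equation for the power series part of `Y₀`. -/
theorem euler_sq_S (z : ℂ) :
    evenSeries (fun m => 2 * m * (2 * m * coeffS m)) z
      = -z ^ 2 * evenSeries coeffS z + 2 * evenSeries (fun m => 2 * m * coeffJ m) z := by
  have hJ := entire_coeffJ.natMul.summable z
  have hJ' : Summable fun m : ℕ => 2 * ((m + 1 : ℕ) : ℂ) * coeffJ (m + 1) * z ^ (2 * (m + 1)) :=
    (summable_nat_add_iff 1).2 hJ
  rw [evenSeries, (entire_coeffS.natMul.natMul.summable z).tsum_eq_zero_add, evenSeries,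
    ← tsum_mul_left, evenSeries, hJ.tsum_eq_zero_add]
  simp only [Nat.cast_zero, mul_zero, zero_mul, zero_add]
  rw [← tsum_mul_left, ← ((entire_coeffS.summable z).mul_left _).tsum_add (hJ'.mul_left 2)]
  congr 1; ext m
  have h1 : ((m + 1 : ℕ) : ℂ) ≠ 0 := by exact_mod_cast Nat.succ_ne_zero m
  have h2 := coeffJ_succ m
  simp only [coeffS, harmSum_succ]
  set n : ℂ := ((m + 1 : ℕ) : ℂ) with hn
  have h3 : 2 * n * (2 * n * (coeffJ (m + 1) * (harmSum m + 1 / n)))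
      = (2 * n * (2 * n * coeffJ (m + 1))) * harmSum m + 4 * n * coeffJ (m + 1) := by
    field_simp; ring
  rw [h3, h2]; ring

theorem hankelH0_eq (z : ℂ) : hankelH0 z = evenSeries coeffJ z + Complex.I * ((2 / Real.pi) *
    (((Real.eulerMascheroniConstant : ℂ) + Complex.log (z / 2)) * evenSeries coeffJ z
      - evenSeries coeffS z)) := by
  rw [hankelH0, besselY0, besselJ0_eq, tsum_eq_evenSeries_coeffS]

/-- `z` times the derivative of `H₀⁽¹⁾`. -/
noncomputable def hankelP (z : ℂ) : ℂ :=
  evenSeries (fun m => 2 * m * coeffJ m) z + Complex.I * ((2 / Real.pi) *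
    (evenSeries coeffJ z + ((Real.eulerMascheroniConstant : ℂ) + Complex.log (z / 2)) *
      evenSeries (fun m => 2 * m * coeffJ m) z - evenSeries (fun m => 2 * m * coeffS m) z))

theorem half_mem_slitPlane {z : ℂ} (hz : 0 < z.re) : z / 2 ∈ Complex.slitPlane := by
  left; simpa using hz

theorem hasDerivAt_logHalf {z : ℂ} (hz : 0 < z.re) :
    HasDerivAt (fun w => Complex.log (w / 2)) (1 / z) z := by
  have h := ((hasDerivAt_id z).div_const 2).clog (half_mem_slitPlane hz)
  have hz0 : z ≠ 0 := by rintro rfl; simp at hz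
  refine h.congr_deriv ?_
  simp only [id]; field_simp

theorem hankelH0_hasDerivAt {z : ℂ} (hz : 0 < z.re) :
    HasDerivAt hankelH0 (hankelP z / z) z := by
  have hz0 : z ≠ 0 := by rintro rfl; simp at hz
  have hJ := entire_coeffJ.hasDerivAt_div hz0
  have hS := entire_coeffS.hasDerivAt_div hz0
  have h := hJ.add ((((((hasDerivAt_logHalf hz).const_add
    (Real.eulerMascheroniConstant : ℂ)).mul hJ).sub hS).const_mul (2 / (Real.pi : ℂ))).const_mul
      Complex.I)
  rw [show hankelH0 = _ from funext hankelH0_eq]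
  refine HasDerivAt.congr_deriv h ?_
  unfold hankelP
  field_simp

/-- Bessel's equation for `H₀⁽¹⁾`, written as the second half of a first order system. -/
theorem hankelP_hasDerivAt {z : ℂ} (hz : 0 < z.re) :
    HasDerivAt hankelP (-z * hankelH0 z) z := by
  have hz0 : z ≠ 0 := by rintro rfl; simp at hz
  have hJ := entire_coeffJ.hasDerivAt_div hz0
  have hJ1 := entire_coeffJ.natMul.hasDerivAt_div hz0
  have hS1 := entire_coeffS.natMul.hasDerivAt_div hz0
  rw [euler_sq_J] at hJ1
  rw [euler_sq_S] at hS1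
  have h := hJ1.add (((((hJ.add ((((hasDerivAt_logHalf hz).const_add
    (Real.eulerMascheroniConstant : ℂ))).mul hJ1)).sub hS1)).const_mul
      (2 / (Real.pi : ℂ))).const_mul Complex.I)
  refine HasDerivAt.congr_deriv h ?_
  rw [hankelH0_eq]
  have hpi : (Real.pi : ℂ) ≠ 0 := by exact_mod_cast Real.pi_ne_zero
  field_simp
  ring

theorem evenSeries_zero (c : ℕ → ℂ) : evenSeries c 0 = c 0 := by
  rw [evenSeries, tsum_eq_single 0 (fun m hm => by simp [hm])]
  simp

/-- Behaviour of `H₀⁽¹⁾` at the origin. -/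
theorem hankelH0_asymp : Tendsto (fun x : ℝ => hankelH0 x - (1 + Complex.I * ((2 / Real.pi) *
    ((Real.eulerMascheroniConstant : ℂ) + (Real.log (x / 2) : ℂ)))))
    (nhdsWithin 0 (Set.Ioi 0)) (nhds 0) := by
  have hcast : Tendsto (fun x : ℝ => (x : ℂ)) (nhdsWithin 0 (Set.Ioi 0)) (nhds 0) :=
    (Complex.continuous_ofReal.tendsto' 0 0 (by simp)).mono_left nhdsWithin_le_nhds
  have hJd := (entire_coeffJ.hasDerivAt 0).1
  have hJ0 : evenSeries coeffJ 0 = 1 := by rw [evenSeries_zero]; simp [coeffJ]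
  have hS0 : evenSeries coeffS 0 = 0 := by rw [evenSeries_zero]; simp [coeffS, harmSum]
  have hJ : Tendsto (fun x : ℝ => evenSeries coeffJ x - 1) (nhdsWithin 0 (Set.Ioi 0)) (nhds 0) := by
    have := (hJd.continuousAt.tendsto.comp hcast).sub_const 1
    simpa [hJ0] using this
  have hS : Tendsto (fun x : ℝ => evenSeries coeffS x) (nhdsWithin 0 (Set.Ioi 0)) (nhds 0) := by
    have := (entire_coeffS.hasDerivAt 0).1.continuousAt.tendsto.comp hcast
    simpa [hS0, Function.comp_def] using this
  have hlogJ : Tendsto (fun x : ℝ => (Real.log x : ℂ) * (evenSeries coeffJ x - 1))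
      (nhdsWithin 0 (Set.Ioi 0)) (nhds 0) := by
    have hO : (fun x : ℝ => evenSeries coeffJ x - 1) =O[nhdsWithin 0 (Set.Ioi 0)]
        fun x : ℝ => (x : ℂ) := by
      have := hJd.isBigO_sub.comp_tendsto hcast
      simpa [hJ0, Function.comp_def] using this
    have h1 := (Asymptotics.isBigO_refl (fun x : ℝ => (Real.log x : ℂ))
      (nhdsWithin 0 (Set.Ioi 0))).mul hO
    refine h1.trans_tendsto ?_
    have h2 : Tendsto (fun x : ℝ => Real.log x * x) (nhdsWithin 0 (Set.Ioi 0)) (nhds 0) := by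
      simpa using tendsto_log_mul_rpow_nhdsGT_zero (r := 1) one_pos
    have h3 := (Complex.continuous_ofReal.tendsto' 0 0 (by simp)).comp h2
    simpa [Function.comp_def] using h3
  have hmain := hJ.add (((((hJ.const_mul ((Real.eulerMascheroniConstant : ℂ) - Real.log 2)).add
    hlogJ).sub hS).const_mul (2 / (Real.pi : ℂ))).const_mul Complex.I)
  simp only [mul_zero, add_zero, sub_zero] at hmain
  refine hmain.congr' ?_
  filter_upwards [self_mem_nhdsWithin] with x hx
  have hx : (0 : ℝ) < x := hx
  have h1 : Complex.log ((x : ℂ) / 2) = (Real.log x : ℂ) - Real.log 2 := by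
    rw [show (x : ℂ) / 2 = ((x / 2 : ℝ) : ℂ) by push_cast; rfl,
      ← Complex.ofReal_log (by positivity), Real.log_div hx.ne' two_ne_zero]
    push_cast; rfl
  rw [hankelH0_eq, h1, Real.log_div hx.ne' two_ne_zero]
  push_cast
  ring

/-! ### A contour integral solving Bessel's equation -/

/-- The square root of `τ² + 1 = s² - 2is` along the ray `τ = s - i`, `s ≥ 0`. -/
noncomputable def rayRoot (s : ℝ) : ℂ := ((s : ℂ) ^ 2 - 2 * Complex.I * s) ^ (2⁻¹ : ℂ)

theorem rayRoot_sq (s : ℝ) : rayRoot s ^ 2 = (s : ℂ) ^ 2 - 2 * Complex.I * s :=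
  Complex.cpow_ofNat_inv_pow _ 2

theorem rayRoot_zero : rayRoot 0 = 0 := by simp [rayRoot]

theorem rayRoot_re_nonneg (s : ℝ) : 0 ≤ (rayRoot s).re := by
  unfold rayRoot
  set q : ℂ := (s : ℂ) ^ 2 - 2 * Complex.I * s
  rcases eq_or_ne q 0 with h | h
  · rw [h]; simp
  · rw [Complex.cpow_def_of_ne_zero h, Complex.exp_re]
    refine mul_nonneg (Real.exp_pos _).le (Real.cos_nonneg_of_neg_pi_div_two_le_of_le ?_ ?_)
    · have := Complex.neg_pi_lt_arg q
      simp [Complex.mul_im, Complex.log_im]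
      linarith
    · have := Complex.arg_le_pi q
      simp [Complex.mul_im, Complex.log_im]
      linarith

theorem rayRoot_sq_re (s : ℝ) : (rayRoot s).re ^ 2 - (rayRoot s).im ^ 2 = s ^ 2 := by
  have h := congrArg Complex.re (rayRoot_sq s)
  simp [pow_two] at h
  nlinarith

theorem rayRoot_sq_im (s : ℝ) : (rayRoot s).re * (rayRoot s).im = - s := by
  have h := congrArg Complex.im (rayRoot_sq s)
  simp [pow_two] at h
  nlinarith

theorem rayRoot_re_ge (s : ℝ) : s ≤ (rayRoot s).re := by
  have h1 := rayRoot_sq_re s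
  have h2 := rayRoot_re_nonneg s
  nlinarith [sq_nonneg (rayRoot s).im]

theorem rayRoot_im_nonpos {s : ℝ} (hs : 0 ≤ s) : (rayRoot s).im ≤ 0 := by
  rcases hs.eq_or_lt with rfl | hs
  · simp [rayRoot_zero]
  · have h1 := rayRoot_sq_im s
    have h2 := rayRoot_re_nonneg s
    by_contra! hc
    nlinarith [mul_nonneg h2 hc.le]

theorem rayRoot_ne_zero {s : ℝ} (hs : 0 < s) : rayRoot s ≠ 0 := by
  intro h
  have := rayRoot_re_ge s
  rw [h] at this
  simp at this; linarith

theorem rayRoot_norm_sq (s : ℝ) : ‖rayRoot s‖ ^ 2 = |s| * √(s ^ 2 + 4) := by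
  rw [← norm_pow, rayRoot_sq]
  have : (s : ℂ) ^ 2 - 2 * Complex.I * s = s * (s - 2 * Complex.I) := by ring
  rw [this, norm_mul, Complex.norm_real, Real.norm_eq_abs, Complex.norm_eq_sqrt_sq_add_sq]
  congr 2
  simp; norm_num

theorem rayRoot_norm_ge {s : ℝ} (hs : 0 ≤ s) : √(2 * s) ≤ ‖rayRoot s‖ := by
  apply Real.sqrt_le_iff.2 ⟨norm_nonneg _, ?_⟩
  rw [rayRoot_norm_sq, abs_of_nonneg hs]
  have : 2 ≤ √(s ^ 2 + 4) := Real.le_sqrt_of_sq_le (by nlinarith)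
  nlinarith

theorem rayRoot_norm_le {s : ℝ} (hs : 0 ≤ s) : ‖rayRoot s‖ ≤ s + 1 := by
  have h := rayRoot_norm_sq s
  rw [abs_of_nonneg hs] at h
  have h2 : √(s ^ 2 + 4) ≤ s + 2 := Real.sqrt_le_iff.2 ⟨by linarith, by nlinarith⟩
  nlinarith [norm_nonneg (rayRoot s)]

theorem rayRoot_hasDerivAt {s : ℝ} (hs : 0 < s) :
    HasDerivAt rayRoot (((s : ℂ) - Complex.I) / rayRoot s) s := by
  have hq : (s : ℂ) ^ 2 - 2 * Complex.I * s ∈ Complex.slitPlane := by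
    left
    simp [pow_two]; positivity
  have h0 : HasDerivAt (fun z : ℂ => z ^ 2 - 2 * Complex.I * z) (2 * s - 2 * Complex.I) (s : ℂ) := by
    have := ((hasDerivAt_id (s : ℂ)).pow 2).sub ((hasDerivAt_id (s : ℂ)).const_mul (2 * Complex.I))
    refine HasDerivAt.congr_deriv this ?_
    simp
  have h1 := (h0.cpow_const (c := 2⁻¹) hq).comp_ofReal
  refine HasDerivAt.congr_deriv h1 ?_
  rw [Complex.cpow_sub _ _ (Complex.slitPlane_ne_zero hq), Complex.cpow_one]
  change 2⁻¹ * (rayRoot s / ((s : ℂ) ^ 2 - 2 * Complex.I * s)) * _ = _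
  rw [← rayRoot_sq]
  have := rayRoot_ne_zero hs
  field_simp

theorem rayRoot_continuous : ContinuousOn rayRoot (Set.Ici 0) := by
  intro s hs
  rcases (show (0 : ℝ) ≤ s from hs).eq_or_lt with rfl | hs
  · have h : Tendsto (fun s : ℝ => √(|s| * √(s ^ 2 + 4))) (nhds 0) (nhds 0) := by
      apply Continuous.tendsto' (by fun_prop); simp
    refine ContinuousAt.continuousWithinAt ?_
    rw [ContinuousAt, rayRoot_zero, tendsto_zero_iff_norm_tendsto_zero]
    refine h.congr fun s => ?_
    rw [← rayRoot_norm_sq, Real.sqrt_sq (norm_nonneg _)]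
  · exact (rayRoot_hasDerivAt hs).continuousAt.continuousWithinAt

/-- Continuous weights on `(0,∞)` whose Laplace transform converges absolutely in the right half-plane. -/
def LaplaceWeight (w : ℝ → ℂ) : Prop :=
  ContinuousOn w (Set.Ioi 0) ∧
    ∀ ε : ℝ, 0 < ε → IntegrableOn (fun s => Real.exp (-(ε * s)) * ‖w s‖) (Set.Ioi 0)

theorem norm_sub_I_le {s : ℝ} (hs : 0 ≤ s) : ‖(s : ℂ) - Complex.I‖ ≤ s + 1 := by
  refine (norm_sub_le _ _).trans ?_
  simp [abs_of_nonneg hs]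

theorem LaplaceWeight.mul {w : ℝ → ℂ} (hw : LaplaceWeight w) :
    LaplaceWeight fun s => -((s : ℂ) - Complex.I) * w s := by
  have hc : ContinuousOn (fun s : ℝ => -((s : ℂ) - Complex.I) * w s) (Set.Ioi 0) :=
    ContinuousOn.mul (by fun_prop) hw.1
  refine ⟨hc, fun ε hε => ?_⟩
  refine Integrable.mono' ((hw.2 (ε / 2) (by positivity)).const_mul (1 + 2 / ε)) ?_ ?_
  · exact (ContinuousOn.mul (by fun_prop) hc.norm).aestronglyMeasurable measurableSet_Ioi
  · filter_upwards [ae_restrict_mem measurableSet_Ioi] with s hs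
    have hs : (0 : ℝ) < s := hs
    rw [Real.norm_of_nonneg (by positivity), norm_mul, norm_neg]
    have h1 := norm_sub_I_le hs.le
    have h2 : Real.exp (-(ε * s)) = Real.exp (-(ε / 2 * s)) * Real.exp (-(ε / 2 * s)) := by
      rw [← Real.exp_add]; ring_nf
    have h3 : (s + 1) * Real.exp (-(ε / 2 * s)) ≤ 1 + 2 / ε := by
      rw [Real.exp_neg, ← div_eq_mul_inv, div_le_iff₀ (Real.exp_pos _)]
      have h4 := Real.add_one_le_exp (ε / 2 * s)
      calc s + 1 ≤ (1 + 2 / ε) * (ε / 2 * s + 1) := by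
            have : (1 + 2 / ε) * (ε / 2 * s + 1) = s + 1 + (ε / 2 * s + 2 / ε) := by
              field_simp; ring
            rw [this]; have : 0 ≤ ε / 2 * s + 2 / ε := by positivity
            linarith
        _ ≤ _ := by gcongr
    calc Real.exp (-(ε * s)) * (‖(s : ℂ) - Complex.I‖ * ‖w s‖)
        ≤ Real.exp (-(ε * s)) * ((s + 1) * ‖w s‖) := by gcongr
      _ = (s + 1) * Real.exp (-(ε / 2 * s)) * (Real.exp (-(ε / 2 * s)) * ‖w s‖) := by rw [h2]; ring
      _ ≤ _ := by gcongr

/-- The contour integral `∫ e^{-zτ} w dτ` along the ray `τ = s - i`, `s > 0`. -/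
noncomputable def rayInt (w : ℝ → ℂ) (z : ℂ) : ℂ :=
  ∫ s in Set.Ioi (0 : ℝ), Complex.exp (-z * ((s : ℂ) - Complex.I)) * w s

theorem norm_exp_ray (z : ℂ) (s : ℝ) :
    ‖Complex.exp (-z * ((s : ℂ) - Complex.I))‖ = Real.exp (-z.im) * Real.exp (-(z.re * s)) := by
  rw [Complex.norm_exp, ← Real.exp_add]
  congr 1
  simp

theorem LaplaceWeight.aesm {w : ℝ → ℂ} (hw : LaplaceWeight w) (z : ℂ) :
    AEStronglyMeasurable (fun s : ℝ => Complex.exp (-z * ((s : ℂ) - Complex.I)) * w s)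
      (volume.restrict (Set.Ioi 0)) :=
  (ContinuousOn.mul (by fun_prop) hw.1).aestronglyMeasurable measurableSet_Ioi

theorem LaplaceWeight.integrable {w : ℝ → ℂ} (hw : LaplaceWeight w) {z : ℂ} (hz : 0 < z.re) :
    IntegrableOn (fun s : ℝ => Complex.exp (-z * ((s : ℂ) - Complex.I)) * w s) (Set.Ioi 0) := by
  refine Integrable.mono' ((hw.2 z.re hz).const_mul (Real.exp (-z.im))) (hw.aesm z) ?_
  refine Eventually.of_forall fun s => ?_
  rw [norm_mul, norm_exp_ray, mul_assoc]

theorem LaplaceWeight.hasDerivAt {w : ℝ → ℂ} (hw : LaplaceWeight w) {z : ℂ} (hz : 0 < z.re) :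
    HasDerivAt (rayInt w) (rayInt (fun s => -((s : ℂ) - Complex.I) * w s) z) z := by
  have hz2 : 0 < z.re / 2 := by positivity
  refine (hasDerivAt_integral_of_dominated_loc_of_deriv_le
    (s := Metric.ball z (z.re / 2))
    (F := fun (z : ℂ) (s : ℝ) => Complex.exp (-z * ((s : ℂ) - Complex.I)) * w s)
    (F' := fun (z : ℂ) (s : ℝ) =>
      Complex.exp (-z * ((s : ℂ) - Complex.I)) * (-((s : ℂ) - Complex.I) * w s))
    (bound := fun s => Real.exp (-z.im + z.re / 2) *
      (Real.exp (-(z.re / 2 * s)) * ‖-((s : ℂ) - Complex.I) * w s‖))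
    (Metric.ball_mem_nhds z hz2) (Eventually.of_forall fun z => hw.aesm z) (hw.integrable hz)
    (hw.mul.aesm z) ?_ ((hw.mul.2 _ hz2).const_mul _) ?_).2
  · filter_upwards [ae_restrict_mem measurableSet_Ioi] with s hs y hy
    have hs : (0 : ℝ) < s := hs
    rw [norm_mul, norm_exp_ray, ← mul_assoc (Real.exp (-z.im + z.re / 2))]
    rw [Metric.mem_ball, dist_eq_norm] at hy
    have h1 := (Complex.abs_re_le_norm (y - z)).trans_lt hy
    have h2 := (Complex.abs_im_le_norm (y - z)).trans_lt hy
    rw [Complex.sub_re, abs_lt] at h1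
    rw [Complex.sub_im, abs_lt] at h2
    gcongr <;> linarith
  · refine Eventually.of_forall fun s y _ => ?_
    have h := (((hasDerivAt_id y).neg.mul_const ((s : ℂ) - Complex.I)).cexp).mul_const (w s)
    refine HasDerivAt.congr_deriv h ?_
    simp; ring

theorem laplaceWeight_inv_rayRoot : LaplaceWeight fun s => (rayRoot s)⁻¹ := by
  have hc : ContinuousOn (fun s => (rayRoot s)⁻¹) (Set.Ioi 0) :=
    (rayRoot_continuous.mono Set.Ioi_subset_Ici_self).inv₀ fun s hs => rayRoot_ne_zero hs
  refine ⟨hc, fun ε hε => ?_⟩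
  have hdom := integrableOn_rpow_mul_exp_neg_mul_rpow (p := 1) (s := -(1 / 2)) (b := ε)
    (by norm_num) one_pos hε
  refine Integrable.mono' hdom ?_ ?_
  · exact (ContinuousOn.mul (by fun_prop) hc.norm).aestronglyMeasurable measurableSet_Ioi
  · filter_upwards [ae_restrict_mem measurableSet_Ioi] with s hs
    have hs : (0 : ℝ) < s := hs
    rw [Real.norm_of_nonneg (by positivity), norm_inv, Real.rpow_one, mul_comm, neg_mul]
    refine mul_le_mul_of_nonneg_right ?_ (Real.exp_pos _).le
    rw [Real.rpow_neg hs.le, ← Real.sqrt_eq_rpow]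
    apply inv_anti₀ (Real.sqrt_pos.2 hs)
    exact (Real.sqrt_le_sqrt (by linarith)).trans (rayRoot_norm_ge hs.le)

/-- The contour integral representing `H₀⁽¹⁾` up to a constant factor. -/
noncomputable def rayF : ℂ → ℂ := rayInt fun s => (rayRoot s)⁻¹

/-- `z` times the derivative of `rayF`. -/
noncomputable def rayP (z : ℂ) : ℂ := z * rayInt (fun s => -((s : ℂ) - Complex.I) * (rayRoot s)⁻¹) z

theorem rayF_hasDerivAt {z : ℂ} (hz : 0 < z.re) : HasDerivAt rayF (rayP z / z) z := by
  have hz0 : z ≠ 0 := by rintro rfl; simp at hz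
  rw [rayP, mul_div_cancel_left₀ _ hz0]
  exact laplaceWeight_inv_rayRoot.hasDerivAt hz

theorem tendsto_exp_mul_lin {x : ℝ} (hx : 0 < x) (C : ℝ) :
    Tendsto (fun s : ℝ => Real.exp (-(x * s)) * (s + C)) atTop (nhds 0) := by
  have h1 : Tendsto (fun s : ℝ => s * Real.exp (-x * s)) atTop (nhds 0) := by
    simpa using tendsto_rpow_mul_exp_neg_mul_atTop_nhds_zero 1 x hx
  have h2 : Tendsto (fun s : ℝ => s ^ (0 : ℝ) * Real.exp (-x * s)) atTop (nhds 0) :=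
    tendsto_rpow_mul_exp_neg_mul_atTop_nhds_zero 0 x hx
  have h3 := h1.add (h2.mul_const C)
  simp only [zero_mul, add_zero] at h3
  refine h3.congr fun s => ?_
  rw [Real.rpow_zero, neg_mul]; ring

/-- Bessel's equation for `rayF`: the defect is the integral of the exact derivative
of `e^{-zτ} √(τ² + 1)`. -/
theorem rayP_hasDerivAt {z : ℂ} (hz : 0 < z.re) : HasDerivAt rayP (-z * rayF z) z := by
  have hw := laplaceWeight_inv_rayRoot
  have h1 := (hasDerivAt_id z).mul (hw.mul.hasDerivAt hz)
  refine HasDerivAt.congr_deriv h1 ?_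
  simp only [id, one_mul]
  have i0 := (hw.integrable hz).const_mul z
  have i1 := hw.mul.integrable hz
  have i2 := (hw.mul.mul.integrable hz).const_mul z
  have hFTC : ∫ s in Set.Ioi (0 : ℝ),
      (Complex.exp (-z * ((s : ℂ) - Complex.I)) * (-((s : ℂ) - Complex.I) * (rayRoot s)⁻¹)
        + z * (Complex.exp (-z * ((s : ℂ) - Complex.I)) *
          (-((s : ℂ) - Complex.I) * (-((s : ℂ) - Complex.I) * (rayRoot s)⁻¹)))
        + z * (Complex.exp (-z * ((s : ℂ) - Complex.I)) * (rayRoot s)⁻¹)) = 0 := by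
    -- `d/dτ (e^{-zτ} √(τ² + 1))` up to sign; the identity uses `τ² = (τ² + 1) - 1`.
    have hd : ∀ s ∈ Set.Ioi (0 : ℝ), HasDerivAt
        (fun s : ℝ => -(Complex.exp (-z * ((s : ℂ) - Complex.I)) * rayRoot s))
        (Complex.exp (-z * ((s : ℂ) - Complex.I)) * (-((s : ℂ) - Complex.I) * (rayRoot s)⁻¹)
        + z * (Complex.exp (-z * ((s : ℂ) - Complex.I)) *
          (-((s : ℂ) - Complex.I) * (-((s : ℂ) - Complex.I) * (rayRoot s)⁻¹)))
        + z * (Complex.exp (-z * ((s : ℂ) - Complex.I)) * (rayRoot s)⁻¹)) s := by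
      intro s hs
      have hs : (0 : ℝ) < s := hs
      have h2 := ((((hasDerivAt_id s).ofReal_comp.sub_const Complex.I).const_mul (-z)).cexp.mul
        (rayRoot_hasDerivAt hs)).neg
      refine HasDerivAt.congr_deriv h2 ?_
      have hr := rayRoot_ne_zero hs
      have hsq := rayRoot_sq s
      simp only [id, Complex.ofReal_one, mul_one]
      field_simp
      rw [hsq]
      linear_combination (-z) * Complex.I_sq
    have hcont : ContinuousWithinAt
        (fun s : ℝ => -(Complex.exp (-z * ((s : ℂ) - Complex.I)) * rayRoot s)) (Set.Ici 0) 0 :=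
      (ContinuousWithinAt.mul (by fun_prop) (rayRoot_continuous 0 Set.self_mem_Ici)).neg
    have hlim : Tendsto (fun s : ℝ => -(Complex.exp (-z * ((s : ℂ) - Complex.I)) * rayRoot s))
        atTop (nhds 0) := by
      apply squeeze_zero_norm' (a := fun s : ℝ =>
        Real.exp (-z.im) * (Real.exp (-(z.re * s)) * (s + 1)))
      · filter_upwards [eventually_ge_atTop 0] with s hs
        rw [norm_neg, norm_mul, norm_exp_ray, mul_assoc]
        have := rayRoot_norm_le hs
        gcongr
      · simpa using (tendsto_exp_mul_lin hz 1).const_mul (Real.exp (-z.im))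
    rw [integral_Ioi_of_hasDerivAt_of_tendsto hcont hd ((i1.add i2).add i0) hlim]
    simp [rayRoot_zero]
  have h5 := integral_add (i1.add i2) i0
  have h6 := integral_add i1 i2
  simp only [Pi.add_apply] at h5 h6
  rw [h5, h6, integral_const_mul, integral_const_mul] at hFTC
  change rayInt _ z + z * rayInt _ z = -z * rayInt _ z
  unfold rayInt
  linear_combination hFTC

/-! ### Behaviour of the contour integral at the origin -/

/-- The derivative of the Gamma function at `1`. -/
theorem integral_log_mul_exp :
    ∫ t in Set.Ioi (0 : ℝ), (Real.log t : ℂ) * (Real.exp (-t) : ℂ)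
      = -(Real.eulerMascheroniConstant : ℂ) := by
  have h1 := Complex.hasDerivAt_GammaIntegral (s := 1) (by simp)
  have h2 : Complex.Gamma =ᶠ[nhds 1] Complex.GammaIntegral := by
    have : ∀ᶠ s : ℂ in nhds 1, 0 < s.re :=
      (isOpen_lt continuous_const Complex.continuous_re).mem_nhds (by simp)
    filter_upwards [this] with s hs using Complex.Gamma_eq_integral hs
  have h3 := (h1.congr_of_eventuallyEq h2).unique Complex.hasDerivAt_Gamma_one
  rw [← h3]
  simp

theorem integrable_exp_inv_sqrt {x : ℝ} (hx : 0 < x) :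
    IntegrableOn (fun s => Real.exp (-(x * s)) * (√s)⁻¹) (Set.Ioi 0) := by
  have h := integrableOn_rpow_mul_exp_neg_mul_rpow (p := 1) (s := -(1 / 2)) (b := x)
    (by norm_num) one_pos hx
  refine h.congr_fun (fun s hs => ?_) measurableSet_Ioi
  have hs : (0 : ℝ) < s := hs
  simp only [Real.rpow_one, neg_mul]
  rw [Real.rpow_neg hs.le, ← Real.sqrt_eq_rpow, mul_comm]

theorem integrable_exp_const {x : ℝ} (hx : 0 < x) (C : ℝ) :
    IntegrableOn (fun s => Real.exp (-(x * s)) * C) (Set.Ioi 0) := by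
  have h := (exp_neg_integrableOn_Ioi 0 hx).mul_const C
  simpa [IntegrableOn] using h

theorem integrable_exp_id {x : ℝ} (hx : 0 < x) :
    IntegrableOn (fun s => Real.exp (-(x * s)) * s) (Set.Ioi 0) := by
  have h := integrableOn_rpow_mul_exp_neg_mul_rpow (p := 1) (s := 1) (b := x)
    (by norm_num) one_pos hx
  refine h.congr_fun (fun s hs => ?_) measurableSet_Ioi
  simp only [Real.rpow_one, neg_mul]
  rw [mul_comm]

/-- The primitive of `1 / √(τ² + 1)` along the ray that vanishes at its initial point. -/
noncomputable def rayLog (s : ℝ) : ℂ :=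
  Complex.log ((s : ℂ) - Complex.I + rayRoot s) + Complex.I * (Real.pi / 2)

theorem rayArg_mem {s : ℝ} (hs : 0 ≤ s) : (s : ℂ) - Complex.I + rayRoot s ∈ Complex.slitPlane := by
  right
  have := rayRoot_im_nonpos hs
  simp; linarith

theorem rayLog_zero : rayLog 0 = 0 := by
  simp only [rayLog, rayRoot_zero, Complex.ofReal_zero, zero_sub, add_zero, Complex.log_neg_I]
  ring

theorem rayLog_continuous : ContinuousOn rayLog (Set.Ici 0) := by
  refine ContinuousOn.add (ContinuousOn.clog ?_ fun s hs => rayArg_mem hs) continuousOn_const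
  exact ContinuousOn.add (by fun_prop) rayRoot_continuous

theorem rayLog_hasDerivAt {s : ℝ} (hs : 0 < s) : HasDerivAt rayLog (rayRoot s)⁻¹ s := by
  have h := ((((hasDerivAt_id s).ofReal_comp.sub_const Complex.I).add
    (rayRoot_hasDerivAt hs)).clog_real (rayArg_mem hs.le)).add_const (Complex.I * (Real.pi / 2))
  refine HasDerivAt.congr_deriv h ?_
  have h1 := rayRoot_ne_zero hs
  have h2 := Complex.slitPlane_ne_zero (rayArg_mem hs.le)
  simp only [id, Complex.ofReal_one, Pi.add_apply]
  field_simp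
  ring

/-- The difference between `rayLog s` and its asymptote `log (2s) + iπ/2` as `s → ∞`. -/
noncomputable def rayErr (s : ℝ) : ℂ :=
  rayLog s - ((Real.log s : ℂ) + (Real.log 2 + Complex.I * (Real.pi / 2)))

theorem rayErr_eq {s : ℝ} (hs : 0 < s) :
    rayErr s = Complex.log ((s : ℂ) - Complex.I + rayRoot s) - (Real.log (2 * s) : ℂ) := by
  rw [rayErr, rayLog, Real.log_mul two_ne_zero hs.ne']
  push_cast; ring

/-- A bound valid on all of `(0, ∞)`, integrable against `e^{-s}`; it serves as the dominating function
for the limit `x → 0` in `laplace_asymp`. -/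
theorem rayErr_norm_le {s : ℝ} (hs : 0 < s) : ‖rayErr s‖ ≤ Real.pi + 2 * (√s)⁻¹ := by
  rw [rayErr_eq hs]
  set w : ℂ := (s : ℂ) - Complex.I + rayRoot s with hw
  have hw1 : 2 * s ≤ ‖w‖ := by
    refine le_trans ?_ (Complex.re_le_norm w)
    have := rayRoot_re_ge s
    simp [hw]; linarith
  have hw2 : ‖w‖ ≤ 2 * s + 2 := by
    refine (norm_add_le _ _).trans ?_
    linarith [norm_sub_I_le hs.le, rayRoot_norm_le hs.le]
  have hw0 : 0 < ‖w‖ := by linarith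
  have hsplit : Complex.log w - (Real.log (2 * s) : ℂ)
      = ((Real.log ‖w‖ - Real.log (2 * s) : ℝ) : ℂ) + (Complex.arg w : ℂ) * Complex.I := by
    rw [Complex.log]; push_cast; ring
  have hsq : √s * √s = s := Real.mul_self_sqrt hs.le
  have hsp : 0 < √s := Real.sqrt_pos.2 hs
  have hlog0 : 0 ≤ Real.log ‖w‖ - Real.log (2 * s) :=
    sub_nonneg.2 (Real.log_le_log (by positivity) hw1)
  have hlog1 : Real.log ‖w‖ - Real.log (2 * s) ≤ 2 * (√s)⁻¹ := by
    rw [← Real.log_div hw0.ne' (by positivity)]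
    have h1 : ‖w‖ / (2 * s) ≤ (1 + (√s)⁻¹) ^ 2 := by
      rw [div_le_iff₀ (by positivity)]
      have h2 : (1 + (√s)⁻¹) ^ 2 * (2 * s) = 2 * s + 2 + 4 * √s := by
        nth_rewrite 2 [← hsq]
        field_simp
        nlinarith
      rw [h2]; linarith
    calc Real.log (‖w‖ / (2 * s)) ≤ Real.log ((1 + (√s)⁻¹) ^ 2) :=
          Real.log_le_log (by positivity) h1
      _ = 2 * Real.log (1 + (√s)⁻¹) := by rw [Real.log_pow]; norm_num
      _ ≤ 2 * (√s)⁻¹ := by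
          have := Real.log_le_sub_one_of_pos (x := 1 + (√s)⁻¹) (by positivity)
          linarith
  rw [hsplit]
  refine (norm_add_le _ _).trans ?_
  rw [norm_mul, Complex.norm_I, Complex.norm_real, Complex.norm_real, mul_one,
    Real.norm_of_nonneg hlog0, Real.norm_eq_abs]
  linarith [Complex.abs_arg_le_pi w]

theorem rayErr_tendsto : Tendsto rayErr atTop (nhds 0) := by
  have h1 : Tendsto (fun s : ℝ => ((s : ℂ) - Complex.I + rayRoot s) / ((2 * s : ℝ) : ℂ)) atTop
      (nhds 1) := by
    rw [tendsto_iff_norm_sub_tendsto_zero]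
    refine squeeze_zero' (Eventually.of_forall fun _ => norm_nonneg _) ?_ tendsto_inv_atTop_zero
    filter_upwards [eventually_gt_atTop 0] with s hs
    have h2 : ‖rayRoot s - s‖ ≤ 1 := by
      have h3 : (rayRoot s - s) * (rayRoot s + s) = -(2 * Complex.I * s) := by
        linear_combination rayRoot_sq s
      have h4 : ‖rayRoot s - s‖ * ‖rayRoot s + s‖ = 2 * s := by
        rw [← norm_mul, h3]; simp [abs_of_pos hs]
      have h5 : 2 * s ≤ ‖rayRoot s + s‖ := by
        refine le_trans ?_ (Complex.re_le_norm _)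
        have := rayRoot_re_ge s
        simp; linarith
      by_contra! hc
      nlinarith
    have h6 : ((s : ℂ) - Complex.I + rayRoot s) / ((2 * s : ℝ) : ℂ) - 1
        = ((rayRoot s - s) - Complex.I) / ((2 * s : ℝ) : ℂ) := by
      have : (s : ℂ) ≠ 0 := by exact_mod_cast hs.ne'
      push_cast; field_simp; ring
    rw [h6, norm_div, Complex.norm_real, Real.norm_of_nonneg (by positivity),
      div_le_iff₀ (by positivity)]
    have h7 : ‖(rayRoot s - s) - Complex.I‖ ≤ 2 := by
      refine (norm_sub_le _ _).trans ?_
      rw [Complex.norm_I]; linarith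
    refine h7.trans (le_of_eq ?_)
    field_simp
  have h2 := h1.clog (by simp)
  rw [Complex.log_one] at h2
  refine h2.congr' ?_
  filter_upwards [eventually_gt_atTop 0] with s hs
  have hw := Complex.slitPlane_ne_zero (rayArg_mem hs.le)
  have h0 : ((2 * s : ℝ) : ℂ) ≠ 0 := by exact_mod_cast (by positivity : 2 * s ≠ 0)
  rw [rayErr_eq hs]
  have h3 := Complex.log_ofReal_mul (r := 2 * s) (by positivity) (div_ne_zero hw h0)
  rw [mul_div_cancel₀ _ h0] at h3
  rw [h3]; ring

theorem rayErr_continuousOn : ContinuousOn rayErr (Set.Ioi 0) := by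
  refine (rayLog_continuous.mono Set.Ioi_subset_Ici_self).sub (ContinuousOn.add ?_ continuousOn_const)
  exact Complex.continuous_ofReal.comp_continuousOn
    (Real.continuousOn_log.mono fun s hs => (show (0 : ℝ) < s from hs).ne')

theorem abs_log_le {s : ℝ} (hs : 0 < s) : |Real.log s| ≤ s + 2 * (√s)⁻¹ := by
  have hsp : 0 < √s := Real.sqrt_pos.2 hs
  rw [abs_le]
  constructor
  -- `log t ≤ t - 1` at `t = s^{-1/2}`
  · have h1 := Real.log_le_sub_one_of_pos (inv_pos.2 hsp)
    rw [Real.log_inv, Real.log_sqrt hs.le] at h1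
    linarith
  · have := Real.log_le_sub_one_of_pos hs
    have : 0 ≤ (√s)⁻¹ := by positivity
    linarith

theorem rayLog_norm_le {s : ℝ} (hs : 0 < s) :
    ‖rayLog s‖ ≤ s + 4 * (√s)⁻¹ + (Real.pi + ‖(Real.log 2 + Complex.I * (Real.pi / 2) : ℂ)‖) := by
  have h : rayLog s = rayErr s + (Real.log s : ℂ) + (Real.log 2 + Complex.I * (Real.pi / 2)) := by
    rw [rayErr]; ring
  rw [h]
  refine (norm_add₃_le).trans ?_
  have h1 := rayErr_norm_le hs
  have h2 := abs_log_le hs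
  rw [Complex.norm_real, Real.norm_eq_abs]
  linarith

/-- The integral of the complex exponential weight reduces to a real Laplace transform
on the positive axis. -/
theorem rayF_ofReal (x : ℝ) : rayF x = Complex.exp (Complex.I * x) *
    ∫ s in Set.Ioi (0 : ℝ), (Real.exp (-(x * s)) : ℂ) * (rayRoot s)⁻¹ := by
  rw [rayF, rayInt, ← integral_const_mul]
  congr 1; ext s
  rw [← mul_assoc]
  congr 1
  rw [Complex.ofReal_exp, ← Complex.exp_add]
  congr 1; push_cast; ring

theorem integrable_exp_rayLog {x : ℝ} (hx : 0 < x) :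
    IntegrableOn (fun s : ℝ => (Real.exp (-(x * s)) : ℂ) * rayLog s) (Set.Ioi 0) := by
  set C := Real.pi + ‖(Real.log 2 + Complex.I * (Real.pi / 2) : ℂ)‖
  refine Integrable.mono' (((integrable_exp_id hx).add
    ((integrable_exp_inv_sqrt hx).const_mul 4)).add (integrable_exp_const hx C)) ?_ ?_
  · exact (ContinuousOn.mul (by fun_prop)
      (rayLog_continuous.mono Set.Ioi_subset_Ici_self)).aestronglyMeasurable measurableSet_Ioi
  · filter_upwards [ae_restrict_mem measurableSet_Ioi] with s hs
    rw [norm_mul, Complex.norm_real, Real.norm_of_nonneg (Real.exp_pos _).le]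
    have := mul_le_mul_of_nonneg_left (rayLog_norm_le hs) (Real.exp_pos (-(x * s))).le
    simp only [Pi.add_apply]
    linarith

/-- Integration by parts followed by the substitution `u = xs`. -/
theorem laplace_by_parts {x : ℝ} (hx : 0 < x) :
    ∫ s in Set.Ioi (0 : ℝ), (Real.exp (-(x * s)) : ℂ) * (rayRoot s)⁻¹
      = ∫ u in Set.Ioi (0 : ℝ), (Real.exp (-u) : ℂ) * rayLog (x⁻¹ * u) := by
  have i1 : IntegrableOn (fun s : ℝ => (Real.exp (-(x * s)) : ℂ) * (rayRoot s)⁻¹) (Set.Ioi 0) := by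
    refine Integrable.mono' (laplaceWeight_inv_rayRoot.2 x hx) ?_ ?_
    · exact (ContinuousOn.mul (by fun_prop)
        laplaceWeight_inv_rayRoot.1).aestronglyMeasurable measurableSet_Ioi
    · refine Eventually.of_forall fun s => ?_
      rw [norm_mul, Complex.norm_real, Real.norm_of_nonneg (Real.exp_pos _).le]
  have i2 := (integrable_exp_rayLog hx).const_mul (x : ℂ)
  have hd : ∀ s ∈ Set.Ioi (0 : ℝ), HasDerivAt (fun s : ℝ => (Real.exp (-(x * s)) : ℂ) * rayLog s)
      ((Real.exp (-(x * s)) : ℂ) * (rayRoot s)⁻¹ -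
        (x : ℂ) * ((Real.exp (-(x * s)) : ℂ) * rayLog s)) s := by
    intro s hs
    have h := (((hasDerivAt_id s).const_mul x).neg.exp.ofReal_comp).mul (rayLog_hasDerivAt hs)
    refine HasDerivAt.congr_deriv h ?_
    simp only [id, Pi.neg_apply]; push_cast; ring
  have hcont : ContinuousWithinAt (fun s : ℝ => (Real.exp (-(x * s)) : ℂ) * rayLog s)
      (Set.Ici 0) 0 :=
    ContinuousWithinAt.mul (by fun_prop) (rayLog_continuous 0 Set.self_mem_Ici)
  have hlim : Tendsto (fun s : ℝ => (Real.exp (-(x * s)) : ℂ) * rayLog s) atTop (nhds 0) := by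
    apply squeeze_zero_norm' _ (tendsto_exp_mul_lin hx
      (4 + (Real.pi + ‖(Real.log 2 + Complex.I * (Real.pi / 2) : ℂ)‖)))
    filter_upwards [eventually_ge_atTop 1] with s hs
    have hs0 : 0 < s := by linarith
    rw [norm_mul, Complex.norm_real, Real.norm_of_nonneg (Real.exp_pos _).le]
    refine mul_le_mul_of_nonneg_left ((rayLog_norm_le hs0).trans ?_) (Real.exp_pos _).le
    have : (√s)⁻¹ ≤ 1 := inv_le_one_of_one_le₀ (Real.one_le_sqrt.2 hs)
    linarith
  have h := integral_Ioi_of_hasDerivAt_of_tendsto hcont hd (i1.sub i2) hlim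
  rw [integral_sub i1 i2, rayLog_zero, mul_zero, sub_zero, sub_eq_zero] at h
  rw [h, integral_const_mul]
  have h2 := integral_comp_mul_left_Ioi
    (fun u : ℝ => (Real.exp (-u) : ℂ) * rayLog (x⁻¹ * u)) 0 hx
  have hx0 : (x : ℂ) ≠ 0 := by exact_mod_cast hx.ne'
  simp only [inv_mul_cancel_left₀ hx.ne', mul_zero] at h2
  rw [h2, Complex.real_smul, Complex.ofReal_inv, mul_inv_cancel_left₀ hx0]

/-- After integration by parts the weight is `rayLog (u / x)`, which is `log u - log x` plus a constant
plus an error that vanishes as `x → 0`. Integrating against `e^{-u}` turns `log u` into `-γ`. -/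
theorem laplace_asymp : Tendsto (fun x : ℝ =>
    (∫ s in Set.Ioi (0 : ℝ), (Real.exp (-(x * s)) : ℂ) * (rayRoot s)⁻¹)
      - (-(Real.eulerMascheroniConstant : ℂ) - Real.log x +
        (Real.log 2 + Complex.I * (Real.pi / 2)))) (nhdsWithin 0 (Set.Ioi 0)) (nhds 0) := by
  have hE : Tendsto (fun x : ℝ => ∫ u in Set.Ioi (0 : ℝ), (Real.exp (-u) : ℂ) * rayErr (x⁻¹ * u))
      (nhdsWithin 0 (Set.Ioi 0)) (nhds (∫ u in Set.Ioi (0 : ℝ), (0 : ℂ))) := by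
    refine tendsto_integral_filter_of_dominated_convergence
      (fun u => Real.exp (-(1 * u)) * Real.pi + 2 * (Real.exp (-(1 * u)) * (√u)⁻¹)) ?_ ?_
      ((integrable_exp_const one_pos _).add ((integrable_exp_inv_sqrt one_pos).const_mul 2)) ?_
    · filter_upwards [self_mem_nhdsWithin] with x hx
      have hx : (0 : ℝ) < x := hx
      refine (ContinuousOn.mul (by fun_prop) (rayErr_continuousOn.comp (by fun_prop) ?_)
        ).aestronglyMeasurable measurableSet_Ioi
      intro u hu
      exact mul_pos (inv_pos.2 hx) hu
    · filter_upwards [Ioo_mem_nhdsGT (one_pos : (0 : ℝ) < 1)] with x hx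
      filter_upwards [ae_restrict_mem measurableSet_Ioi] with u hu
      have hu : (0 : ℝ) < u := hu
      have hx1 : 1 ≤ x⁻¹ := (one_le_inv₀ hx.1).2 hx.2.le
      have h1 := rayErr_norm_le (mul_pos (inv_pos.2 hx.1) hu)
      have h2 : (√(x⁻¹ * u))⁻¹ ≤ (√u)⁻¹ :=
        inv_anti₀ (Real.sqrt_pos.2 hu) (Real.sqrt_le_sqrt (by nlinarith))
      rw [norm_mul, Complex.norm_real, Real.norm_of_nonneg (Real.exp_pos _).le, one_mul]
      calc _ ≤ Real.exp (-u) * (Real.pi + 2 * (√u)⁻¹) := by gcongr; linarith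
        _ = _ := by ring
    · filter_upwards [ae_restrict_mem measurableSet_Ioi] with u hu
      have hu : (0 : ℝ) < u := hu
      have h1 : Tendsto (fun x : ℝ => x⁻¹ * u) (nhdsWithin 0 (Set.Ioi 0)) atTop :=
        tendsto_inv_nhdsGT_zero.atTop_mul_const hu
      simpa [Function.comp_def] using (rayErr_tendsto.comp h1).const_mul (Real.exp (-u) : ℂ)
  rw [integral_zero] at hE
  refine hE.congr' ?_
  filter_upwards [self_mem_nhdsWithin] with x hx
  have hx : (0 : ℝ) < x := hx
  rw [laplace_by_parts hx]
  set c : ℂ := Real.log 2 + Complex.I * (Real.pi / 2) with hc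
  have i1 : IntegrableOn (fun t : ℝ => (Real.log t : ℂ) * (Real.exp (-t) : ℂ)) (Set.Ioi 0) := by
    refine Integrable.mono' ((integrable_exp_id one_pos).add
      ((integrable_exp_inv_sqrt one_pos).const_mul 2)) ?_ ?_
    · exact ((Complex.continuous_ofReal.comp_continuousOn (Real.continuousOn_log.mono
        fun s hs => (show (0 : ℝ) < s from hs).ne')).mul
          (by fun_prop)).aestronglyMeasurable measurableSet_Ioi
    · filter_upwards [ae_restrict_mem measurableSet_Ioi] with s hs
      rw [norm_mul, Complex.norm_real, Complex.norm_real,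
        Real.norm_of_nonneg (Real.exp_pos _).le, Real.norm_eq_abs]
      have := mul_le_mul_of_nonneg_right (abs_log_le hs) (Real.exp_pos (-s)).le
      simp only [Pi.add_apply, one_mul]
      linarith
  have i2 : IntegrableOn (fun t : ℝ => (Real.exp (-t) : ℂ) * (c - Real.log x)) (Set.Ioi 0) := by
    have := (integrable_exp_const one_pos 1).ofReal (𝕜 := ℂ)
    simp only [one_mul, mul_one] at this
    exact this.mul_const _
  have i3 : ∫ t in Set.Ioi (0 : ℝ), (Real.exp (-t) : ℂ) * (c - Real.log x) = c - Real.log x := by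
    have h := integral_exp_neg_Ioi_zero
    have h' : ∫ t in Set.Ioi (0 : ℝ), (Real.exp (-t) : ℂ) = 1 := by
      have := integral_ofReal (𝕜 := ℂ) (μ := volume.restrict (Set.Ioi 0))
        (f := fun t : ℝ => Real.exp (-t))
      refine this.trans ?_
      rw [h]; simp
    rw [integral_mul_const, h', one_mul]
  have i4 : IntegrableOn (fun u : ℝ => (Real.exp (-u) : ℂ) * rayLog (x⁻¹ * u)) (Set.Ioi 0) := by
    have h := integrableOn_Ioi_comp_mul_left_iff
      (fun u : ℝ => (Real.exp (-u) : ℂ) * rayLog (x⁻¹ * u)) 0 hx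
    rw [mul_zero] at h
    refine h.1 ?_
    simp only [inv_mul_cancel_left₀ hx.ne']
    exact integrable_exp_rayLog hx
  have key : ∀ u ∈ Set.Ioi (0 : ℝ), (Real.exp (-u) : ℂ) * rayErr (x⁻¹ * u)
      = (Real.exp (-u) : ℂ) * rayLog (x⁻¹ * u) -
        ((Real.log u : ℂ) * (Real.exp (-u) : ℂ) + (Real.exp (-u) : ℂ) * (c - Real.log x)) := by
    intro u hu
    have hu : (0 : ℝ) < u := hu
    rw [rayErr, Real.log_mul (inv_pos.2 hx).ne' hu.ne', Real.log_inv]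
    push_cast; ring
  have i5 := integral_sub i4 (i1.add i2)
  simp only [Pi.add_apply] at i5
  have i6 := integral_add i1 i2
  rw [setIntegral_congr_fun measurableSet_Ioi key, i5, i6, i3, integral_log_mul_exp]
  ring

/-- Behaviour of the contour integral at the origin; up to the factor `-2i/π` it is that of
`H₀⁽¹⁾`, see `hankelH0_asymp`. -/
theorem rayF_asymp : Tendsto (fun x : ℝ => rayF x
      - (-(Real.eulerMascheroniConstant : ℂ) - Real.log x +
        (Real.log 2 + Complex.I * (Real.pi / 2)))) (nhdsWithin 0 (Set.Ioi 0)) (nhds 0) := by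
  have hcast : Tendsto (fun x : ℝ => (x : ℂ)) (nhdsWithin 0 (Set.Ioi 0)) (nhds 0) :=
    (Complex.continuous_ofReal.tendsto' 0 0 (by simp)).mono_left nhdsWithin_le_nhds
  have hd : HasDerivAt (fun z : ℂ => Complex.exp (Complex.I * z)) Complex.I 0 := by
    have := ((hasDerivAt_id (0 : ℂ)).const_mul Complex.I).cexp
    refine HasDerivAt.congr_deriv this ?_
    simp
  have he : Tendsto (fun x : ℝ => Complex.exp (Complex.I * x)) (nhdsWithin 0 (Set.Ioi 0))
      (nhds 1) := by
    have := hd.continuousAt.tendsto.comp hcast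
    simpa [Function.comp_def] using this
  have hlog : Tendsto (fun x : ℝ => (Real.log x : ℂ) * (Complex.exp (Complex.I * x) - 1))
      (nhdsWithin 0 (Set.Ioi 0)) (nhds 0) := by
    have hO : (fun x : ℝ => Complex.exp (Complex.I * x) - 1) =O[nhdsWithin 0 (Set.Ioi 0)]
        fun x : ℝ => (x : ℂ) := by
      have := hd.isBigO_sub.comp_tendsto hcast
      simpa [Function.comp_def] using this
    have h1 := (Asymptotics.isBigO_refl (fun x : ℝ => (Real.log x : ℂ))
      (nhdsWithin 0 (Set.Ioi 0))).mul hO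
    refine h1.trans_tendsto ?_
    have h2 : Tendsto (fun x : ℝ => Real.log x * x) (nhdsWithin 0 (Set.Ioi 0)) (nhds 0) := by
      simpa using tendsto_log_mul_rpow_nhdsGT_zero (r := 1) one_pos
    have h3 := (Complex.continuous_ofReal.tendsto' 0 0 (by simp)).comp h2
    simpa [Function.comp_def] using h3
  have h := ((he.mul laplace_asymp).add ((he.sub_const 1).mul_const
    (-(Real.eulerMascheroniConstant : ℂ) +
        (Real.log 2 + Complex.I * (Real.pi / 2))))).sub hlog
  simp only [mul_zero, sub_self, zero_mul, add_zero] at h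
  refine h.congr fun x => ?_
  rw [rayF_ofReal]
  ring

/-! ### The integral representation and the Hankel bound -/

theorem norm_le_of_tendsto_zero {f f' : ℝ → ℂ} {x C : ℝ} (hx : 0 < x)
    (hf : ∀ t ∈ Set.Ioc 0 x, HasDerivAt f (f' t) t) (hC : ∀ t ∈ Set.Ioc 0 x, ‖f' t‖ ≤ C)
    (h0 : Tendsto f (nhdsWithin 0 (Set.Ioi 0)) (nhds 0)) : ‖f x‖ ≤ C * x := by
  have hx' : x ∈ Set.Ioc 0 x := ⟨hx, le_rfl⟩
  have hC0 : 0 ≤ C := (norm_nonneg _).trans (hC x hx')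
  have h1 : Tendsto (fun y => ‖f x - f y‖) (nhdsWithin 0 (Set.Ioi 0)) (nhds ‖f x - 0‖) :=
    (tendsto_const_nhds.sub h0).norm
  rw [sub_zero] at h1
  refine le_of_tendsto h1 ?_
  filter_upwards [Ioo_mem_nhdsGT hx] with y hy
  have h2 := Convex.norm_image_sub_le_of_norm_hasDerivWithin_le
    (fun t ht => (hf t ht).hasDerivWithinAt) hC (convex_Ioc 0 x) ⟨hy.1, hy.2.le⟩ hx'
  refine h2.trans (mul_le_mul_of_nonneg_left ?_ hC0)
  rw [Real.norm_of_nonneg (by linarith [hy.2])]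
  linarith [hy.1]

/-- A solution of Bessel's equation on `(0, ∞)` that tends to `0` at the origin vanishes near the
origin. The equation is written as the system `x D' = P`, `P' = -x D`. -/
theorem frobenius_unique {D P : ℝ → ℂ} (hD : ∀ x, 0 < x → HasDerivAt D (P x / x) x)
    (hP : ∀ x, 0 < x → HasDerivAt P (-x * D x) x)
    (h0 : Tendsto D (nhdsWithin 0 (Set.Ioi 0)) (nhds 0)) :
    ∃ δ > 0, ∀ x ∈ Set.Ioo 0 δ, D x = 0 := by
  obtain ⟨δ₀, hδ₀, hb⟩ : ∃ δ₀ > 0, ∀ x ∈ Set.Ioo 0 δ₀, ‖D x‖ ≤ 1 := by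
    have h : ∀ᶠ x in nhdsWithin (0 : ℝ) (Set.Ioi 0), ‖D x‖ < 1 := by
      have := h0.norm
      rw [norm_zero] at this
      exact this.eventually (gt_mem_nhds one_pos)
    obtain ⟨u, hu, h⟩ := mem_nhdsGT_iff_exists_Ioo_subset.1 h
    exact ⟨u, hu, fun x hx => (h hx).le⟩
  set δ := min δ₀ (1 / 2) with hδdef
  have hδ : 0 < δ := lt_min hδ₀ (by norm_num)
  have hδ2 : δ ≤ 1 / 2 := min_le_right _ _
  have hb1 : ∀ x ∈ Set.Ioo 0 δ, ‖D x‖ ≤ 1 :=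
    fun x hx => hb x ⟨hx.1, hx.2.trans_le (min_le_left _ _)⟩
  -- A nonzero limit of `P` at `0` would force a logarithmic singularity of `D`.
  have hP0 : Tendsto P (nhdsWithin 0 (Set.Ioi 0)) (nhds 0) := by
    have hE : ∀ x ∈ Set.Ioo 0 δ, HasDerivAt (fun x : ℝ => D x - P x * (Real.log x : ℂ))
        (x * D x * (Real.log x : ℂ)) x := by
      intro x hx
      have hl := (Real.hasDerivAt_log hx.1.ne').ofReal_comp
      refine HasDerivAt.congr_deriv ((hD x hx.1).sub ((hP x hx.1).mul hl)) ?_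
      push_cast
      ring
    have hEb : ∀ x ∈ Set.Ioo 0 δ, ‖(x * D x * (Real.log x : ℂ) : ℂ)‖ ≤ 1 := by
      intro x hx
      have h1 := Real.abs_log_mul_self_lt x hx.1 (by linarith [hx.2])
      rw [norm_mul, norm_mul, Complex.norm_real, Complex.norm_real, mul_right_comm,
        ← norm_mul, mul_comm x, Real.norm_eq_abs]
      calc _ ≤ (1 : ℝ) * 1 := mul_le_mul h1.le (hb1 x hx) (norm_nonneg _) zero_le_one
        _ = 1 := one_mul 1
    have hm : δ / 2 ∈ Set.Ioo 0 δ := ⟨by linarith, by linarith⟩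
    set B := ‖D (δ / 2) - P (δ / 2) * (Real.log (δ / 2) : ℂ)‖ + 2
    have hB : ∀ x ∈ Set.Ioo 0 δ, ‖P x * (Real.log x : ℂ)‖ ≤ B := by
      intro x hx
      have h2 := Convex.norm_image_sub_le_of_norm_hasDerivWithin_le
        (fun t ht => (hE t ht).hasDerivWithinAt) hEb (convex_Ioo 0 δ) hm hx
      have h3 : ‖x - δ / 2‖ ≤ 1 := by
        rw [Real.norm_eq_abs, abs_le]; constructor <;> linarith [hx.1, hx.2]
      set e := D (δ / 2) - P (δ / 2) * (Real.log (δ / 2) : ℂ)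
      have h4 : P x * (Real.log x : ℂ) = D x - (D x - P x * (Real.log x : ℂ) - e) - e := by ring
      rw [h4]
      refine (norm_sub_le _ _).trans ?_
      have h5 := norm_sub_le (D x) (D x - P x * (Real.log x : ℂ) - e)
      have h6 := hb1 x hx
      linarith
    have hlog : Tendsto (fun x : ℝ => B * (-Real.log x)⁻¹) (nhdsWithin 0 (Set.Ioi 0))
        (nhds (B * 0)) :=
      (tendsto_inv_atTop_zero.comp
        (tendsto_neg_atBot_atTop.comp Real.tendsto_log_nhdsGT_zero)).const_mul B
    rw [mul_zero] at hlog
    refine squeeze_zero_norm' ?_ hlog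
    filter_upwards [Ioo_mem_nhdsGT hδ] with x hx
    have hl : Real.log x < 0 := Real.log_neg hx.1 (by linarith [hx.2])
    have := hB x hx
    rw [norm_mul, Complex.norm_real, Real.norm_eq_abs, abs_of_neg hl] at this
    rwa [← div_eq_mul_inv, le_div_iff₀ (by linarith)]
  -- Integrating the system twice from `0` gains a factor `x² ≤ 1/4` in the bound for `D`.
  have hiter : ∀ n : ℕ, ∀ x ∈ Set.Ioo 0 δ, ‖D x‖ ≤ (1 / 4) ^ n := by
    intro n
    induction n with
    | zero => simpa using hb1
    | succ n ih =>
      set M : ℝ := (1 / 4) ^ n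
      have hM : 0 ≤ M := by positivity
      have hPx : ∀ x ∈ Set.Ioo 0 δ, ‖P x‖ ≤ M * x * x := by
        intro x hx
        refine norm_le_of_tendsto_zero hx.1 (fun t ht => hP t ht.1) (fun t ht => ?_) hP0
        rw [norm_mul, norm_neg, Complex.norm_real, Real.norm_of_nonneg ht.1.le, mul_comm]
        exact mul_le_mul (ih t ⟨ht.1, ht.2.trans_lt hx.2⟩) ht.2 ht.1.le hM
      intro x hx
      have h1 : ‖D x‖ ≤ M * x * x := by
        refine norm_le_of_tendsto_zero hx.1 (fun t ht => hD t ht.1) (fun t ht => ?_) h0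
        rw [norm_div, Complex.norm_real, Real.norm_of_nonneg ht.1.le, div_le_iff₀ ht.1]
        refine (hPx t ⟨ht.1, ht.2.trans_lt hx.2⟩).trans ?_
        have := mul_le_mul_of_nonneg_left ht.2 hM
        exact mul_le_mul_of_nonneg_right this ht.1.le
      have hx2 : x * x ≤ 1 / 4 := by nlinarith [hx.1, hx.2]
      calc ‖D x‖ ≤ M * (x * x) := by rw [← mul_assoc]; exact h1
        _ ≤ M * (1 / 4) := by gcongr
        _ = _ := (pow_succ _ _).symm
  refine ⟨δ, hδ, fun x hx => ?_⟩
  have ht : Tendsto (fun n : ℕ => ((1 : ℝ) / 4) ^ n) atTop (nhds 0) :=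
    tendsto_pow_atTop_nhds_zero_of_lt_one (by norm_num) (by norm_num)
  have := ge_of_tendsto' ht (fun n => hiter n x hx)
  exact norm_le_zero_iff.1 this

/-- The integral representation of `H₀⁽¹⁾` in the right half-plane: both sides solve Bessel's equation
with the same behaviour at the origin, and the identity theorem carries their equality near `0` on
the positive axis to the half-plane. -/
theorem hankelH0_eq_rayF {z : ℂ} (hz : 0 < z.re) :
    hankelH0 z = -(2 * Complex.I / Real.pi) * rayF z := by
  set c : ℂ := 2 * Complex.I / Real.pi with hc
  have hpi : (Real.pi : ℂ) ≠ 0 := by exact_mod_cast Real.pi_ne_zero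
  have hD : ∀ z : ℂ, 0 < z.re → HasDerivAt (fun z => hankelH0 z + c * rayF z)
      ((hankelP z + c * rayP z) / z) z := by
    intro z hz
    refine HasDerivAt.congr_deriv
      ((hankelH0_hasDerivAt hz).add ((rayF_hasDerivAt hz).const_mul c)) ?_
    ring
  have hP : ∀ z : ℂ, 0 < z.re → HasDerivAt (fun z => hankelP z + c * rayP z)
      (-z * (hankelH0 z + c * rayF z)) z := by
    intro z hz
    refine HasDerivAt.congr_deriv
      ((hankelP_hasDerivAt hz).add ((rayP_hasDerivAt hz).const_mul c)) ?_
    ring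
  have h0 : Tendsto (fun x : ℝ => hankelH0 x + c * rayF x) (nhdsWithin 0 (Set.Ioi 0)) (nhds 0) := by
    have h := hankelH0_asymp.add (rayF_asymp.const_mul c)
    rw [mul_zero, add_zero] at h
    refine h.congr' ?_
    filter_upwards [self_mem_nhdsWithin] with x hx
    have hx : (0 : ℝ) < x := hx
    rw [Real.log_div hx.ne' two_ne_zero, hc]
    push_cast
    field_simp
    ring_nf
    simp only [Complex.I_sq]
    ring
  obtain ⟨δ, hδ, hu⟩ := frobenius_unique (fun x hx => (hD x (by simpa using hx)).comp_ofReal)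
    (fun x hx => (hP x (by simpa using hx)).comp_ofReal) h0
  have hopen : IsOpen {z : ℂ | 0 < z.re} := isOpen_lt continuous_const Complex.continuous_re
  have han : AnalyticOnNhd ℂ (fun z => hankelH0 z + c * rayF z) {z : ℂ | 0 < z.re} :=
    DifferentiableOn.analyticOnNhd
      (fun z hz => (hD z hz).differentiableAt.differentiableWithinAt) hopen
  have hδ' : 0 < ((δ / 2 : ℝ) : ℂ).re := by simpa using hδ
  have hfreq : ∃ᶠ z in nhdsWithin ((δ / 2 : ℝ) : ℂ) {((δ / 2 : ℝ) : ℂ)}ᶜ,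
      hankelH0 z + c * rayF z = 0 := by
    have ht : Tendsto (fun x : ℝ => (x : ℂ)) (nhdsWithin (δ / 2) {δ / 2}ᶜ)
        (nhdsWithin ((δ / 2 : ℝ) : ℂ) {((δ / 2 : ℝ) : ℂ)}ᶜ) := by
      refine tendsto_nhdsWithin_of_tendsto_nhds_of_eventually_within _
        (Complex.continuous_ofReal.continuousWithinAt) ?_
      filter_upwards [self_mem_nhdsWithin] with x hx h
      exact hx (Complex.ofReal_injective h)
    refine ht.frequently (Eventually.frequently ?_)
    filter_upwards [mem_nhdsWithin_of_mem_nhds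
      (Ioo_mem_nhds (show 0 < δ / 2 by linarith) (show δ / 2 < δ by linarith))] with x hx
    exact hu x hx
  have hpre : IsPreconnected {z : ℂ | 0 < z.re} := (convex_halfSpace_re_gt 0).isPreconnected
  have := han.eqOn_zero_of_preconnected_of_frequently_eq_zero hpre hδ' hfreq hz
  simp only [Pi.zero_apply] at this
  rw [neg_mul]
  exact eq_neg_of_add_eq_zero_left this

/-- On the ray one has `|√(τ² + 1)| ≥ √(2s)`, and `∫ e^{-xs} (2s)^{-1/2} ds = √(π / (2x))`. -/
theorem norm_rayF_le {z : ℂ} (hz : 0 < z.re) :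
    ‖rayF z‖ ≤ Real.exp (-z.im) * √(Real.pi / (2 * z.re)) := by
  have hdom := (integrable_exp_inv_sqrt hz).const_mul (Real.exp (-z.im) * (√2)⁻¹)
  have h1 : ‖rayF z‖ ≤ ∫ s in Set.Ioi (0 : ℝ), (Real.exp (-z.im) * (√2)⁻¹) *
      (Real.exp (-(z.re * s)) * (√s)⁻¹) := by
    refine norm_integral_le_of_norm_le hdom ?_
    filter_upwards [ae_restrict_mem measurableSet_Ioi] with s hs
    have hs : (0 : ℝ) < s := hs
    rw [norm_mul, norm_exp_ray, norm_inv]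
    have h2 := rayRoot_norm_ge hs.le
    rw [Real.sqrt_mul zero_le_two] at h2
    have h3 : ‖rayRoot s‖⁻¹ ≤ (√2 * √s)⁻¹ := inv_anti₀ (by positivity) h2
    rw [mul_inv] at h3
    calc _ ≤ Real.exp (-z.im) * Real.exp (-(z.re * s)) * ((√2)⁻¹ * (√s)⁻¹) := by gcongr
      _ = _ := by ring
  have h2 : ∫ s in Set.Ioi (0 : ℝ), Real.exp (-(z.re * s)) * (√s)⁻¹ = √(Real.pi / z.re) := by
    have h := Real.integral_rpow_mul_exp_neg_mul_Ioi (a := 1 / 2) (by norm_num) hz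
    rw [Real.Gamma_one_half_eq, ← Real.sqrt_eq_rpow, ← Real.sqrt_mul (by positivity)] at h
    rw [show Real.pi / z.re = 1 / z.re * Real.pi by ring, ← h]
    refine setIntegral_congr_fun measurableSet_Ioi (fun s hs => ?_)
    have hs : (0 : ℝ) < s := hs
    rw [show (1 / 2 - 1 : ℝ) = -(1 / 2) by norm_num, Real.rpow_neg hs.le,
      ← Real.sqrt_eq_rpow, mul_comm]
  refine h1.trans_eq ?_
  rw [integral_const_mul, h2, mul_assoc, ← Real.sqrt_inv, ← Real.sqrt_mul (by positivity)]
  congr 2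
  field_simp

/-- The sharp envelope of the Hankel function, valid in the whole right half-plane. -/
theorem norm_hankelH0_le {z : ℂ} (hz : 0 < z.re) :
    ‖hankelH0 z‖ ≤ Real.exp |z.im| * √(2 / (Real.pi * z.re)) := by
  rw [hankelH0_eq_rayF hz, norm_mul]
  have h1 : ‖-(2 * Complex.I / Real.pi)‖ = 2 / Real.pi := by
    simp [abs_of_pos Real.pi_pos]
  have h2 : Real.exp (-z.im) ≤ Real.exp |z.im| := Real.exp_le_exp.2 (neg_le_abs _)
  have h3 : 2 / Real.pi * √(Real.pi / (2 * z.re)) = √(2 / (Real.pi * z.re)) := by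
    rw [← Real.sqrt_sq (show 0 ≤ 2 / Real.pi by positivity), ← Real.sqrt_mul (by positivity)]
    congr 1
    field_simp
  rw [h1]
  calc _ ≤ 2 / Real.pi * (Real.exp (-z.im) * √(Real.pi / (2 * z.re))) := by
        gcongr; exact norm_rayF_le hz
    _ = Real.exp (-z.im) * (2 / Real.pi * √(Real.pi / (2 * z.re))) := by ring
    _ ≤ _ := by rw [h3]; gcongr

/-- `H̄₀⁽¹⁾` is the conjugate of `H₀⁽¹⁾` reflected in the real axis, so it obeys the same bound. -/
theorem hankelH0bar_eq {z : ℂ} (hz : 0 < z.re) :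
    hankelH0bar z = (starRingEnd ℂ) (hankelH0 ((starRingEnd ℂ) z)) := by
  have h2 : (starRingEnd ℂ) 2 = 2 := Complex.conj_ofNat 2
  have hJ : (starRingEnd ℂ) (besselJ0 ((starRingEnd ℂ) z)) = besselJ0 z := by
    unfold besselJ0
    rw [Complex.conj_tsum]
    simp [h2]
  have hl : (starRingEnd ℂ) (Complex.log ((starRingEnd ℂ) z / 2)) = Complex.log (z / 2) := by
    have hz2 : 0 < (z / 2).re := by simpa using hz
    have : (z / 2).arg ≠ Real.pi := by
      intro h
      have := Complex.arg_eq_pi_iff.1 h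
      linarith [this.1]
    rw [show (starRingEnd ℂ) z / 2 = (starRingEnd ℂ) (z / 2) by simp [h2], Complex.log_conj _ this,
      Complex.conj_conj]
  have hh (m : ℕ) : (starRingEnd ℂ) (harmSum m) = harmSum m := by
    simp [harmSum]
  have hY : (starRingEnd ℂ) (besselY0 ((starRingEnd ℂ) z)) = besselY0 z := by
    unfold besselY0
    rw [map_mul, map_sub, map_mul, map_add, hl, hJ, Complex.conj_tsum]
    simp [hh, h2]
  unfold hankelH0bar hankelH0
  rw [map_add, map_mul, hJ, hY, Complex.conj_I]
  ring

theorem norm_hankelH0bar_le {z : ℂ} (hz : 0 < z.re) :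
    ‖hankelH0bar z‖ ≤ Real.exp |z.im| * √(2 / (Real.pi * z.re)) := by
  rw [hankelH0bar_eq hz, Complex.norm_conj]
  simpa using norm_hankelH0_le (z := (starRingEnd ℂ) z) (by simpa using hz)

/-! ### The potentials and the estimate of `I₁` -/

/-- In polar coordinates `∫_{|x-y| ≤ d} |x-y|⁻¹ dy = 2πd`. -/
theorem riesz_kernel {d : ℝ} (hd : 0 ≤ d) (x : E2) :
    Integrable (fun y : E2 => (Set.Iic d).indicator (fun r => r⁻¹) ‖x - y‖) ∧
      ∫ y : E2, (Set.Iic d).indicator (fun r => r⁻¹) ‖x - y‖ = 2 * Real.pi * d := by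
  set F : ℝ → ℝ := (Set.Iic d).indicator (fun r => r⁻¹)
  have hF : ∀ r ∈ Set.Ioi (0 : ℝ), r ^ (Module.finrank ℝ E2 - 1) • F r
      = (Set.Ioc 0 d).indicator (fun _ => (1 : ℝ)) r := by
    intro r hr
    have hr : 0 < r := hr
    simp only [F, Set.indicator_apply, Set.mem_Iic, Set.mem_Ioc, hr, true_and, finrank_euclideanSpace,
      Fintype.card_fin, smul_eq_mul]
    split_ifs
    · simp [hr.ne']
    · simp
  have hsub : Set.Ioi 0 ∩ Set.Ioc 0 d = Set.Ioc 0 d := Set.inter_eq_right.2 fun r hr => hr.1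
  have h1 : Integrable (fun y : E2 => F ‖y‖) := by
    rw [integrable_fun_norm_addHaar]
    refine IntegrableOn.congr_fun (f := (Set.Ioc 0 d).indicator (fun _ => (1 : ℝ))) ?_
      (fun r hr => (hF r hr).symm) measurableSet_Ioi
    refine IntegrableOn.integrable_indicator ?_ measurableSet_Ioc |>.integrableOn
    simp
  have h2 : ∫ y : E2, F ‖y‖ = 2 * Real.pi * d := by
    rw [integral_fun_norm_addHaar, setIntegral_congr_fun measurableSet_Ioi hF,
      setIntegral_indicator measurableSet_Ioc, hsub]
    simp [Measure.real, EuclideanSpace.volume_ball_fin_two, hd, Real.pi_pos.le]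
    ring
  exact ⟨h1.comp_sub_left x, by rw [← h2]; exact integral_sub_left_eq_self (fun y => F ‖y‖) _ x⟩

/-- Cauchy–Schwarz for a potential whose kernel is dominated by `A |x-y|^{-1/2}`. The kernel `H` is not
assumed measurable: if the integrand is not integrable, the left side is `0`. -/
theorem norm_layer_le {Ω : Set E2} (hΩ : MeasurableSet Ω) {x : E2} {d A : ℝ} (hd : 0 ≤ d)
    (hA : 0 ≤ A) (hxd : ∀ y ∈ Ω, ‖x - y‖ ≤ d) {H g : E2 → ℂ}
    (hH : ∀ y ∈ Ω, ‖H y‖ ≤ A * (√‖x - y‖)⁻¹) (hg : Continuous g) (hgc : HasCompactSupport g) :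
    ‖∫ y in Ω, g y * H y‖ ≤ A * (√(∫ y, ‖g y‖ ^ 2) * √(2 * Real.pi * d)) := by
  obtain ⟨hi, hI⟩ := riesz_kernel hd x
  set κ : E2 → ℝ := fun y => (√‖x - y‖)⁻¹
  have hκm : AEStronglyMeasurable κ (volume.restrict Ω) := by
    refine Measurable.aestronglyMeasurable ?_
    fun_prop
  have hκ : ∀ y ∈ Ω, κ y ^ 2 = (Set.Iic d).indicator (fun r => r⁻¹) ‖x - y‖ := by
    intro y hy
    rw [Set.indicator_of_mem (Set.mem_Iic.2 (hxd y hy))]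
    simp only [κ]
    rw [inv_pow, Real.sq_sqrt (norm_nonneg _)]
  have hκ2 : MemLp κ 2 (volume.restrict Ω) := by
    rw [memLp_two_iff_integrable_sq hκm]
    exact hi.integrableOn.congr_fun (fun y hy => (hκ y hy).symm) hΩ
  have hg2 : MemLp (fun y => ‖g y‖) 2 (volume.restrict Ω) :=
    hg.norm.memLp_of_hasCompactSupport hgc.norm
  have hCS := integral_mul_le_Lp_mul_Lq_of_nonneg (μ := volume.restrict Ω) (p := 2) (q := 2)
    Real.HolderConjugate.two_two (f := fun y => ‖g y‖) (g := κ)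
    (Eventually.of_forall fun y => norm_nonneg _)
    (Eventually.of_forall fun y => inv_nonneg.2 (Real.sqrt_nonneg _))
    (by simpa using hg2) (by simpa using hκ2)
  simp only [Real.rpow_two, ← Real.sqrt_eq_rpow] at hCS
  have hind0 : ∀ y : E2, 0 ≤ (Set.Iic d).indicator (fun r => r⁻¹) ‖x - y‖ := fun y =>
    Set.indicator_apply_nonneg fun _ => inv_nonneg.2 (norm_nonneg _)
  have hk : ∫ y in Ω, κ y ^ 2 ≤ 2 * Real.pi * d := by
    rw [setIntegral_congr_fun hΩ hκ, ← hI]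
    exact setIntegral_le_integral hi (Eventually.of_forall hind0)
  have hgi : Integrable (fun y => ‖g y‖ ^ 2) := by
    refine Continuous.integrable_of_hasCompactSupport (by fun_prop) ?_
    exact hgc.norm.comp_left (g := fun r : ℝ => r ^ 2) (by simp)
  have hgl : ∫ y in Ω, ‖g y‖ ^ 2 ≤ ∫ y, ‖g y‖ ^ 2 :=
    setIntegral_le_integral hgi (Eventually.of_forall fun y => sq_nonneg _)
  have hprod : Integrable (fun y => ‖g y‖ * κ y) (volume.restrict Ω) := hg2.integrable_mul hκ2
  calc ‖∫ y in Ω, g y * H y‖ ≤ ∫ y in Ω, A * (‖g y‖ * κ y) := by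
        refine norm_integral_le_of_norm_le (hprod.const_mul A) ?_
        filter_upwards [ae_restrict_mem hΩ] with y hy
        rw [norm_mul]
        calc _ ≤ ‖g y‖ * (A * κ y) := by gcongr; exact hH y hy
          _ = _ := by ring
    _ = A * ∫ y in Ω, ‖g y‖ * κ y := integral_const_mul _ _
    _ ≤ A * (√(∫ y in Ω, ‖g y‖ ^ 2) * √(∫ y in Ω, κ y ^ 2)) := by gcongr
    _ ≤ _ := by gcongr

theorem integral_density_le {f₀ f₁ : E2 → ℝ} (hf₀ : Continuous f₀) (hf₁ : Continuous f₁)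
    (hc₀ : HasCompactSupport f₀) (hc₁ : HasCompactSupport f₁) (ω : ℂ) {g : E2 → ℂ}
    (hg : ∀ y, ‖g y‖ ≤ |f₁ y| + ‖ω‖ * |f₀ y|) :
    ∫ y, ‖g y‖ ^ 2 ≤ 2 * ((∫ y, f₁ y ^ 2) + ‖ω‖ ^ 2 * ∫ y, f₀ y ^ 2) := by
  have hi₀ : Integrable (fun y => f₀ y ^ 2) :=
    Continuous.integrable_of_hasCompactSupport (by fun_prop)
      (hc₀.comp_left (g := fun r : ℝ => r ^ 2) (by simp))
  have hi₁ : Integrable (fun y => f₁ y ^ 2) :=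
    Continuous.integrable_of_hasCompactSupport (by fun_prop)
      (hc₁.comp_left (g := fun r : ℝ => r ^ 2) (by simp))
  rw [← integral_const_mul, ← integral_add hi₁ (hi₀.const_mul _), ← integral_const_mul]
  refine integral_mono_of_nonneg (Eventually.of_forall fun y => sq_nonneg _)
    ((hi₁.add (hi₀.const_mul _)).const_mul 2) (Eventually.of_forall fun y => ?_)
  have h1 := pow_le_pow_left₀ (norm_nonneg _) (hg y) 2
  have h2 := sq_nonneg (|f₁ y| - ‖ω‖ * |f₀ y|)
  have h3 := sq_abs (f₁ y)
  have h4 : (‖ω‖ * |f₀ y|) ^ 2 = ‖ω‖ ^ 2 * f₀ y ^ 2 := by rw [mul_pow, sq_abs]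
  simp only
  nlinarith

theorem sobNormSq_zero (f : E2 → ℝ) : sobNormSq 0 f = ∫ y, f y ^ 2 := by
  simp [sobNormSq, Finset.filter_true_of_mem]

/-- The bound for each of the two potentials in `I₁`, to be used with `H = H₀⁽¹⁾`, `ε = iω` and
`H = H̄₀⁽¹⁾`, `ε = -iω`. Points of `∂Ω` lie at distance at most `diam Ω` from those of the open set
`Ω`, and never in it, so the kernel is evaluated away from its singularity. -/
theorem norm_hankel_layer_le {Ω : Set E2} (hΩo : IsOpen Ω) (hΩb : Bornology.IsBounded Ω)
    {f₀ f₁ : E2 → ℝ} (hf₀ : Continuous f₀) (hf₁ : Continuous f₁)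
    (hc₀ : HasCompactSupport f₀) (hc₁ : HasCompactSupport f₁) {H : ℂ → ℂ}
    (hH : ∀ z : ℂ, 0 < z.re → ‖H z‖ ≤ Real.exp |z.im| * √(2 / (Real.pi * z.re)))
    {x : E2} (hx : x ∈ frontier Ω) {ω : ℂ} (hω : 0 < ω.re) {ε : ℂ} (hε : ‖ε‖ = ‖ω‖) :
    ‖∫ y in Ω, ((f₁ y : ℂ) + ε * (f₀ y : ℂ)) * H (ω * (‖x - y‖ : ℝ))‖ ≤
      Real.exp (Metric.diam Ω * |ω.im|) * √(2 / (Real.pi * ω.re)) *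
        (√(2 * (sobNormSq 0 f₁ + ‖ω‖ ^ 2 * sobNormSq 0 f₀)) * √(2 * Real.pi * Metric.diam Ω)) := by
  have hxd : ∀ y ∈ Ω, ‖x - y‖ ≤ Metric.diam Ω := by
    intro y hy
    rw [← dist_eq_norm, ← Metric.diam_closure]
    exact Metric.dist_le_diam_of_mem hΩb.closure (frontier_subset_closure hx) (subset_closure hy)
  have hxΩ : x ∉ Ω := fun h => (hΩo.frontier_eq ▸ hx).2 h
  have hker : ∀ y ∈ Ω, ‖H (ω * (‖x - y‖ : ℝ))‖ ≤
      (Real.exp (Metric.diam Ω * |ω.im|) * √(2 / (Real.pi * ω.re))) * (√‖x - y‖)⁻¹ := by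
    intro y hy
    have hr : 0 < ‖x - y‖ := norm_pos_iff.2 (sub_ne_zero.2 fun h => hxΩ (h ▸ hy))
    have h := hH (ω * (‖x - y‖ : ℝ)) (by rw [Complex.re_mul_ofReal]; positivity)
    rw [Complex.re_mul_ofReal, Complex.im_mul_ofReal, abs_mul, abs_of_pos hr] at h
    refine h.trans ?_
    rw [mul_assoc, ← Real.sqrt_inv, ← Real.sqrt_mul (by positivity),
      show 2 / (Real.pi * ω.re) * ‖x - y‖⁻¹ = 2 / (Real.pi * (ω.re * ‖x - y‖)) by field_simp]
    rw [mul_comm |ω.im|]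
    gcongr
    exact hxd y hy
  have hgc : HasCompactSupport fun y => (f₁ y : ℂ) + ε * (f₀ y : ℂ) :=
    (hc₁.comp_left (g := fun r : ℝ => (r : ℂ)) (by simp)).add
      (hc₀.comp_left (g := fun r : ℝ => ε * (r : ℂ)) (by simp))
  refine (norm_layer_le hΩo.measurableSet Metric.diam_nonneg (by positivity) hxd hker
    (by fun_prop) hgc).trans ?_
  gcongr
  rw [sobNormSq_zero, sobNormSq_zero]
  refine integral_density_le hf₀ hf₁ hc₀ hc₁ ω fun y => (norm_add_le _ _).trans ?_
  simp [hε]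

theorem sobNormSq_zero_nonneg (f : E2 → ℝ) : 0 ≤ sobNormSq 0 f := by
  rw [sobNormSq_zero]
  exact integral_nonneg fun y => sq_nonneg _

/-- **Bound on `I₁`** (Lemma 3.1, first estimate):
`|I₁(k)| ≤ (π/2)|∂Ω| d ((1/3)|k|³‖f₁‖²_{(0)} + (1/5)|k|⁵‖f₀‖²_{(0)}) e^{2d|k₂|}/k₁`. -/
theorem I1_bound
    (Ω : Set E2) (hΩo : IsOpen Ω) (hΩb : Bornology.IsBounded Ω) (hΩ2 : HasC2Boundary Ω)
    (f₀ f₁ : E2 → ℝ) (hf₀ : ContDiff ℝ 1 f₀) (hf₁ : ContDiff ℝ 1 f₁)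
    (hc₀ : HasCompactSupport f₀) (hc₁ : HasCompactSupport f₁)
    (hs₀ : tsupport f₀ ⊆ Ω) (hs₁ : tsupport f₁ ⊆ Ω)
    (k : ℂ) (hk : 0 < k.re) :
    ‖I1 Ω f₀ f₁ k‖ ≤
      Real.pi / 2 * (μH[1] (frontier Ω)).toReal * Metric.diam Ω *
        (1 / 3 * ‖k‖ ^ 3 * sobNormSq 0 f₁ + 1 / 5 * ‖k‖ ^ 5 * sobNormSq 0 f₀) *
        Real.exp (2 * Metric.diam Ω * |k.im|) / k.re := by
  set d := Metric.diam Ω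
  have hd : 0 ≤ d := Metric.diam_nonneg
  set N₀ := sobNormSq 0 f₀
  set N₁ := sobNormSq 0 f₁
  have hN₀ : 0 ≤ N₀ := sobNormSq_zero_nonneg f₀
  have hN₁ : 0 ≤ N₁ := sobNormSq_zero_nonneg f₁
  set b := (μH[1] (frontier Ω)).toReal
  have hb : 0 ≤ b := ENNReal.toReal_nonneg
  set e := Real.exp (2 * d * |k.im|)
  have he : 0 ≤ e := (Real.exp_pos _).le
  -- The product of the two layers, for `ω = ks` and `x ∈ ∂Ω`.
  have hprod : ∀ s ∈ Set.Ioo (0 : ℝ) 1, ∀ x ∈ frontier Ω,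
      ‖((-Complex.I / 4) * ∫ y in Ω,
        ((f₁ y : ℂ) + Complex.I * (k * s) * (f₀ y : ℂ)) * hankelH0 (k * s * (‖x - y‖ : ℝ))) *
      ((Complex.I / 4) * ∫ y in Ω,
        ((f₁ y : ℂ) - Complex.I * (k * s) * (f₀ y : ℂ)) * hankelH0bar (k * s * (‖x - y‖ : ℝ)))‖
      ≤ d * e / (2 * (k.re * s)) * (N₁ + (‖k‖ * s) ^ 2 * N₀) := by
    intro s hs x hx
    have hs0 := hs.1
    have hre : (k * s).re = k.re * s := Complex.re_mul_ofReal _ _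
    have him : (k * s).im = k.im * s := Complex.im_mul_ofReal _ _
    have hω : 0 < (k * s).re := by rw [hre]; positivity
    have hn : ‖k * s‖ = ‖k‖ * s := by
      rw [norm_mul, Complex.norm_real, Real.norm_of_nonneg hs0.le]
    have h1 := norm_hankel_layer_le hΩo hΩb hf₀.continuous hf₁.continuous hc₀ hc₁
      (fun z hz => norm_hankelH0_le hz) hx hω (ε := Complex.I * (k * s)) (by simp)
    have h2 := norm_hankel_layer_le hΩo hΩb hf₀.continuous hf₁.continuous hc₀ hc₁
      (fun z hz => norm_hankelH0bar_le hz) hx hω (ε := -(Complex.I * (k * s))) (by simp)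
    simp only [neg_mul, ← sub_eq_add_neg] at h2
    rw [hn, hre, him] at h1 h2
    set B := Real.exp (d * |k.im * s|) * √(2 / (Real.pi * (k.re * s))) *
        (√(2 * (N₁ + (‖k‖ * s) ^ 2 * N₀)) * √(2 * Real.pi * d)) with hB
    have hee : Real.exp (d * |k.im * s|) * Real.exp (d * |k.im * s|) ≤ e := by
      rw [← Real.exp_add]
      refine Real.exp_le_exp.2 ?_
      rw [abs_mul, abs_of_pos hs0]
      have := mul_le_of_le_one_right (mul_nonneg hd (abs_nonneg k.im)) hs.2.le
      linarith
    have hBB : B * B ≤ 16 * (d * e / (2 * (k.re * s)) * (N₁ + (‖k‖ * s) ^ 2 * N₀)) := by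
      calc B * B = (Real.exp (d * |k.im * s|) * Real.exp (d * |k.im * s|)) *
            √(2 / (Real.pi * (k.re * s))) ^ 2 *
            (√(2 * (N₁ + (‖k‖ * s) ^ 2 * N₀)) ^ 2 * √(2 * Real.pi * d) ^ 2) := by rw [hB]; ring
        _ = (Real.exp (d * |k.im * s|) * Real.exp (d * |k.im * s|)) *
            (2 / (Real.pi * (k.re * s))) *
            ((2 * (N₁ + (‖k‖ * s) ^ 2 * N₀)) * (2 * Real.pi * d)) := by
            rw [Real.sq_sqrt (by positivity), Real.sq_sqrt (by positivity),
              Real.sq_sqrt (by positivity)]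
        _ ≤ e * (2 / (Real.pi * (k.re * s))) *
            ((2 * (N₁ + (‖k‖ * s) ^ 2 * N₀)) * (2 * Real.pi * d)) := by gcongr
        _ = _ := by
            have := Real.pi_pos.ne'
            field_simp
            ring
    have hB0 : 0 ≤ B := by positivity
    rw [norm_mul, norm_mul, norm_mul, norm_div, norm_div, norm_neg, Complex.norm_I]
    simp only [Complex.norm_ofNat]
    have h12 := mul_le_mul h1 h2 (norm_nonneg _) hB0
    linarith
  -- Integration over `∂Ω` and the factor `ω²`.
  have hin : ‖∫ s in Set.Ioo (0 : ℝ) 1, (k * s) ^ 2 *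
    ∫ x in frontier Ω,
      ((-Complex.I / 4) * ∫ y in Ω,
        ((f₁ y : ℂ) + Complex.I * (k * s) * (f₀ y : ℂ)) * hankelH0 (k * s * (‖x - y‖ : ℝ))) *
      ((Complex.I / 4) * ∫ y in Ω,
        ((f₁ y : ℂ) - Complex.I * (k * s) * (f₀ y : ℂ)) * hankelH0bar (k * s * (‖x - y‖ : ℝ)))
      ∂(μH[1])‖ ≤ ∫ s in Set.Ioo (0 : ℝ) 1,
        ‖k‖ ^ 2 * (d * e / (2 * k.re)) * b * (N₁ * s + ‖k‖ ^ 2 * N₀ * s ^ 3) := by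
    refine norm_integral_le_of_norm_le ?_ ?_
    · exact (Continuous.integrableOn_Icc (by fun_prop)).mono_set Set.Ioo_subset_Icc_self
    · filter_upwards [ae_restrict_mem measurableSet_Ioo] with s hs
      have hs0 := hs.1
      have h := norm_setIntegral_le_of_norm_le_const (frontier_finite Ω hΩb hΩ2) (hprod s hs)
      rw [norm_mul, norm_pow, norm_mul, Complex.norm_real, Real.norm_of_nonneg hs0.le]
      refine (mul_le_mul_of_nonneg_left h (by positivity)).trans_eq ?_
      change (‖k‖ * s) ^ 2 * (_ * b) = _
      field_simp
  have hval : ∫ s in Set.Ioo (0 : ℝ) 1,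
        ‖k‖ ^ 2 * (d * e / (2 * k.re)) * b * (N₁ * s + ‖k‖ ^ 2 * N₀ * s ^ 3)
      = ‖k‖ ^ 2 * (d * e / (2 * k.re)) * b * (N₁ / 2 + ‖k‖ ^ 2 * N₀ / 4) := by
    rw [← integral_Ioc_eq_integral_Ioo, ← intervalIntegral.integral_of_le zero_le_one,
      intervalIntegral.integral_const_mul, intervalIntegral.integral_add
        (Continuous.intervalIntegrable (by fun_prop) _ _)
        (Continuous.intervalIntegrable (by fun_prop) _ _),
      intervalIntegral.integral_const_mul, intervalIntegral.integral_const_mul, integral_id,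
      integral_pow]
    norm_num
    left
    ring
  rw [hval] at hin
  unfold I1
  rw [norm_mul, norm_mul, Complex.norm_ofNat]
  refine (mul_le_mul_of_nonneg_left hin (by positivity)).trans ?_
  -- The constants `1/2` and `1/4` are dominated by `π/6` and `π/10`.
  have hpi := Real.pi_gt_three
  calc 2 * ‖k‖ * (‖k‖ ^ 2 * (d * e / (2 * k.re)) * b * (N₁ / 2 + ‖k‖ ^ 2 * N₀ / 4))
      = b * d * (1 / 2 * (‖k‖ ^ 3 * N₁) + 1 / 4 * (‖k‖ ^ 5 * N₀)) * e / k.re := by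
        field_simp
    _ ≤ b * d * (Real.pi / 6 * (‖k‖ ^ 3 * N₁) + Real.pi / 10 * (‖k‖ ^ 5 * N₀)) * e / k.re := by
        have h6 : 1 / 2 ≤ Real.pi / 6 := by linarith
        have h10 : 1 / 4 ≤ Real.pi / 10 := by linarith
        gcongr
    _ = _ := by ring
end
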